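/- arXiv:2003.06246 — 4 statements merged into one kernel-verified Lean document; each statement's English description precedes it below -/
import Mathlib

section
/- Let k be an algebraically closed field, n ≥ 1 and 1 ≤ d ≤ n. Let e_1, …, e_{2n} be the standard basis of k^{2n} and E_d = span(e_1, …, e_d). For a d-dimensional linear subspace U of k^{2n}, there exists M ∈ Sp_{2n}(k) with M(E_d) = U if and only if U is isotropic. In other words, the orbit of E_d under the action of Sp_{2n}(k) on d-dimensional subspaces of k^{2n} is exactly the set of d-dimensional isotropic subspaces. -/
/-!
An isotropic subspace is the span of the first columns of a symplectic matrix because every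
isotropic family extends to a symplectic basis.

* If `u₁, …, u_m` is linearly independent and isotropic with `m < n`, its symplectic orthogonal has
  dimension at least `2n - m > m`, so it contains a vector outside the span; this vector can be
  added to the family because `J` is alternating. Hence a basis of `U` extends to `n` vectors
  spanning a Lagrangian subspace (`exists_lagrangian_family`).
* Let the rows of `P` be these `n` vectors. `P` has a right inverse `Q`, and `F₀ = J Q` satisfies
  `P J F₀ = -1`. The matrix `A = F₀ᵀ J F₀` is alternating, so `A = C - Cᵀ` with `C` triangular, and
  `F = F₀ + Pᵀ Cᵀ` satisfies `P J F = -1` and `Fᵀ J F = 0` (`exists_dual_frame`). The matrix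
  `[Pᵀ | F]` is then symplectic.

Conversely `E_d` is isotropic since `d ≤ n`, and symplectic matrices preserve isotropy.
-/

open Matrix BigOperators

/-- The standard symplectic matrix `J = [[0, -Iₙ],[Iₙ, 0]]` of size `2n × 2n`. -/
def Jmat (k : Type*) [Field k] (n : ℕ) : Matrix (Fin (2*n)) (Fin (2*n)) k :=
  Matrix.of fun a b => if a.1 + n = b.1 then (-1 : k) else if b.1 + n = a.1 then 1 else 0

/-- A subspace `U ⊆ k^{2n}` is isotropic if `uᵀ J w = 0` for all `u, w ∈ U`. -/
def IsIsotropic (k : Type*) [Field k] (n : ℕ) (U : Submodule k (Fin (2*n) → k)) : Prop :=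
  ∀ u ∈ U, ∀ w ∈ U, u ⬝ᵥ (Jmat k n).mulVec w = 0

/-- `Kspace k n a` is the subspace `K_a` (with `a` a 1-indexed index in `{0,…,2n}`):
`K_0 = 0`, `K_a = span(e_1,…,e_a)` for `1 ≤ a ≤ n`, and
`K_{n+i} = span(e_1,…,e_n, e_{n+i},…,e_{2n})` for `1 ≤ i ≤ n`. -/
def Kspace (k : Type*) [Field k] (n : ℕ) (a : ℕ) : Submodule k (Fin (2*n) → k) :=
  Submodule.span k
    {v | ∃ p : Fin (2*n), ((p.1 < a ∧ p.1 < n) ∨ (n < a ∧ a ≤ p.1 + 1)) ∧ v = Pi.single p 1}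

/-- `σ` on 1-indexed `{1,…,2n}`: `σ(a) = a-1` for `a ≤ n`, `σ(a) = a+1` for `n < a < 2n`,
`σ(2n) = n`. -/
def sigmaFn (n a : ℕ) : ℕ := if a ≤ n then a - 1 else if a < 2*n then a + 1 else n

/-- Membership in `\overline{I}^{Sp}_{d,2n}` (0-indexed entries): a `d`-tuple of pairwise
distinct elements of `Fin (2n)` such that for some `r ≤ d`, the first `r` entries are
strictly increasing with (1-indexed) values `≤ n` and the remaining entries are strictly
decreasing with (1-indexed) values `> n`. -/
def IsSpBarTuple (n : ℕ) {d : ℕ} (i : Fin d → Fin (2*n)) : Prop :=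
  Function.Injective i ∧ ∃ r ≤ d,
    (∀ a b : Fin d, a < b → b.1 < r → i a < i b) ∧
    (∀ a : Fin d, a.1 < r → (i a).1 < n) ∧
    (∀ a b : Fin d, a < b → r ≤ a.1 → i b < i a) ∧
    (∀ a : Fin d, r ≤ a.1 → n ≤ (i a).1)

/-- Membership in `I^{Sp}_{d,2n}`: a tuple of `\overline{I}^{Sp}_{d,2n}` whose entries
contain no pair `{t, n+t}`. -/
def IsSpTuple (n : ℕ) {d : ℕ} (i : Fin d → Fin (2*n)) : Prop :=
  IsSpBarTuple n i ∧ ∀ a b : Fin d, (i b).1 ≠ (i a).1 + n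

/-- The order `i ≥^{Sp} j`: for every `t`, `i_t ≥ j_t` if `j_t ≤ n` (1-indexed), and
`n < i_t ≤ j_t` if `j_t > n`. -/
def spGE (n : ℕ) {d : ℕ} (i j : Fin d → Fin (2*n)) : Prop :=
  ∀ t : Fin d, if (j t).1 < n then j t ≤ i t else (n ≤ (i t).1 ∧ i t ≤ j t)

/-- The coordinate subspace `e_i = span(e_{i_1},…,e_{i_d})`. -/
def eSpan (k : Type*) [Field k] {n d : ℕ} (i : Fin d → Fin (2*n)) :
    Submodule k (Fin (2*n) → k) :=
  Submodule.span k (Set.range fun t => Pi.single (i t) (1 : k))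

/-- The Borel subgroup `B` of `Sp_{2n}(k)`: symplectic matrices of block form
`[[A, B'],[0, D]]` with `A` upper triangular. -/
def inB (k : Type*) [Field k] (n : ℕ) (M : Matrix (Fin (2*n)) (Fin (2*n)) k) : Prop :=
  Mᵀ * Jmat k n * M = Jmat k n ∧
  ∀ a b : Fin (2*n), ((n ≤ a.1 ∧ b.1 < n) ∨ (a.1 < n ∧ b.1 < n ∧ b.1 < a.1)) → M a b = 0

/-- The opposite Borel subgroup `B⁻` of `Sp_{2n}(k)`: symplectic matrices of block form
`[[A, 0],[C, D]]` with `A` lower triangular. -/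
def inBminus (k : Type*) [Field k] (n : ℕ) (M : Matrix (Fin (2*n)) (Fin (2*n)) k) : Prop :=
  Mᵀ * Jmat k n * M = Jmat k n ∧
  ∀ a b : Fin (2*n), ((a.1 < n ∧ n ≤ b.1) ∨ (a.1 < n ∧ b.1 < n ∧ a.1 < b.1)) → M a b = 0

/-- The Plücker coordinate `p_S(M)`: determinant of the `d×d` submatrix of `M` formed by
the rows in `S` taken in increasing order (and `0` if `S` does not have `d` elements). -/
def pluckerS {k : Type*} [Field k] {n d : ℕ} (M : Matrix (Fin (2*n)) (Fin d) k)
    (S : Finset (Fin (2*n))) : k :=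
  if hS : S.card = d then
    (M.submatrix (fun a => (S.orderIsoOfFin hS a : Fin (2*n))) id).det
  else 0

/-- The Plücker coordinate attached to the underlying set of a tuple `j`. -/
def pluckerT {k : Type*} [Field k] {n d : ℕ} (M : Matrix (Fin (2*n)) (Fin d) k)
    (j : Fin d → Fin (2*n)) : k :=
  pluckerS M (Finset.image j Finset.univ)

/-- The row-selection function for `R(i,t)`: rows `i_1, …, i_{d-2}, t, n+t` in order. -/
def rowsFn {n : ℕ} (d : ℕ) (i : Fin (d-2) → Fin (2*n)) (t : Fin n) : Fin d → Fin (2*n) :=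
  fun l =>
    if h : l.1 < d - 2 then i ⟨l.1, h⟩
    else if l.1 = d - 2 then ⟨t.1, by have := t.2; omega⟩
    else ⟨n + t.1, by have := t.2; omega⟩

/-- The column-selection function enumerating, in increasing order, the columns of a
`2n × d` matrix other than `j1 < j2`. -/
def colSkip (d : ℕ) (j1 j2 : Fin d) (c : Fin (d-2)) : Fin d :=
  if c.1 < j1.1 then ⟨c.1, by have := c.2; omega⟩
  else if c.1 + 1 < j2.1 then ⟨c.1 + 1, by have := c.2; omega⟩
  else ⟨c.1 + 2, by have := c.2; omega⟩

/-- Membership of a subspace `U` in the Richardson variety `R(u,v)` of `Sp_{2n}(k)/P_d`: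
`U` is a `d`-dimensional isotropic subspace with `dim(U ∩ K_{u_t}) ≥ t` and
`dim(U ∩ K_{σ(v_t)}) ≤ t-1` for all `1 ≤ t ≤ d`. -/
def inRich (k : Type*) [Field k] (n : ℕ) {d : ℕ} (u v : Fin d → Fin (2*n))
    (U : Submodule k (Fin (2*n) → k)) : Prop :=
  IsIsotropic k n U ∧ Module.finrank k U = d ∧
  ∀ t : Fin d,
    t.1 + 1 ≤ Module.finrank k ↥(U ⊓ Kspace k n ((u t).1 + 1)) ∧
    Module.finrank k ↥(U ⊓ Kspace k n (sigmaFn n ((v t).1 + 1))) ≤ t.1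

/-! ### The standard symplectic form -/

/-- The splitting of the `2n` coordinates into the first `n` and the last `n`. -/
def splitEquiv (n : ℕ) : Fin n ⊕ Fin n ≃ Fin (2 * n) :=
  finSumFinEquiv.trans (finCongr (two_mul n).symm)

lemma splitEquiv_inl (n : ℕ) (i : Fin n) : (splitEquiv n (Sum.inl i)).1 = i.1 := by
  simp [splitEquiv]

lemma splitEquiv_inr (n : ℕ) (i : Fin n) : (splitEquiv n (Sum.inr i)).1 = n + i.1 := by
  simp [splitEquiv, add_comm]

section

variable {k : Type*} [Field k]

lemma Jmat_submatrix (n : ℕ) :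
    (Jmat k n).submatrix (splitEquiv n) (splitEquiv n) = Matrix.J (Fin n) k := by
  ext a b
  rcases a with a | a <;> rcases b with b | b <;>
    simp only [Jmat, Matrix.J, submatrix_apply, of_apply, splitEquiv_inl, splitEquiv_inr,
      fromBlocks_apply₁₁, fromBlocks_apply₁₂, fromBlocks_apply₂₁, fromBlocks_apply₂₂,
      Matrix.zero_apply, Matrix.neg_apply, one_apply, Fin.ext_iff]
  · rw [if_neg (by omega), if_neg (by omega)]
  · by_cases h : a.1 = b.1
    · rw [if_pos (by omega), if_pos h]
    · rw [if_neg (by omega), if_neg (by omega), if_neg h, neg_zero]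
  · by_cases h : a.1 = b.1
    · rw [if_neg (by omega), if_pos (by omega), if_pos h]
    · rw [if_neg (by omega), if_neg (by omega), if_neg h]
  · rw [if_neg (by omega), if_neg (by omega)]

lemma Jmat_eq (n : ℕ) :
    Jmat k n = (Matrix.J (Fin n) k).submatrix (splitEquiv n).symm (splitEquiv n).symm := by
  rw [← Jmat_submatrix]; simp

lemma Jmat_sq (n : ℕ) : Jmat k n * Jmat k n = -1 := by
  rw [Jmat_eq, submatrix_mul_equiv, J_squared, submatrix_neg]
  simp

lemma Jmat_transpose (n : ℕ) : (Jmat k n)ᵀ = -Jmat k n := by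
  rw [Jmat_eq, transpose_submatrix, J_transpose, submatrix_neg]
  rfl

lemma form_swap (n : ℕ) (u w : Fin (2 * n) → k) :
    u ⬝ᵥ (Jmat k n).mulVec w = -(w ⬝ᵥ (Jmat k n).mulVec u) := by
  rw [dotProduct_mulVec, ← mulVec_transpose, Jmat_transpose, neg_mulVec, neg_dotProduct,
    dotProduct_comm]

/-- The form is alternating, not merely skew-symmetric, so this also holds in characteristic 2. -/
lemma form_self (n : ℕ) (u : Fin (2 * n) → k) : u ⬝ᵥ (Jmat k n).mulVec u = 0 := by
  have h : u ⬝ᵥ (Jmat k n).mulVec u =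
      (u ∘ splitEquiv n) ⬝ᵥ (Matrix.J (Fin n) k).mulVec (u ∘ splitEquiv n) := by
    rw [← Jmat_submatrix, submatrix_mulVec_equiv]
    simp [Function.comp_assoc, comp_equiv_dotProduct_comp_equiv]
  rw [h]
  simp [dotProduct, mulVec, Matrix.J, Fintype.sum_sum_type, one_apply, mul_comm]

lemma isUnit_det_of_symplectic (n : ℕ) (M : Matrix (Fin (2 * n)) (Fin (2 * n)) k)
    (hM : Mᵀ * Jmat k n * M = Jmat k n) : IsUnit M.det := by
  have h1 : (Jmat k n).det ≠ 0 := by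
    have h := congrArg Matrix.det (Jmat_sq (k := k) n)
    rw [det_mul] at h
    intro h0
    rw [h0, mul_zero] at h
    have : ((-1 : Matrix (Fin (2 * n)) (Fin (2 * n)) k)).det = 1 := by
      rw [det_neg]; simp
    rw [this] at h
    exact zero_ne_one h
  have h2 := congrArg Matrix.det hM
  rw [det_mul] at h2
  rw [isUnit_iff_ne_zero]
  intro h0
  rw [h0, mul_zero] at h2
  exact h1 h2.symm

/-! ### Extending isotropic families -/

/-- An isotropic subspace of dimension `d ≤ m ≤ n` has a basis that extends to a linearly
independent isotropic family of `m` vectors. -/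
lemma exists_isotropic_family (n d : ℕ) (U : Submodule k (Fin (2 * n) → k))
    (hU : Module.finrank k U = d) (hiso : IsIsotropic k n U) (m : ℕ) (hdm : d ≤ m) :
    m ≤ n → ∃ u : Fin m → Fin (2 * n) → k, LinearIndependent k u ∧
      (∀ i j, u i ⬝ᵥ (Jmat k n).mulVec (u j) = 0) ∧
      Submodule.span k {v | ∃ i : Fin m, i.1 < d ∧ v = u i} = U := by
  induction m, hdm using Nat.le_induction with
  | base =>
    intro _
    let b := Module.finBasisOfFinrankEq k U hU
    refine ⟨fun i => (b i : Fin (2 * n) → k), ?_, fun i j => hiso _ (b i).2 _ (b j).2, ?_⟩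
    · exact b.linearIndependent.map' U.subtype (Submodule.ker_subtype U)
    · have hs : {v | ∃ i : Fin d, i.1 < d ∧ v = (b i : Fin (2 * n) → k)} =
          U.subtype '' Set.range b := by
        ext v
        constructor
        · rintro ⟨i, -, rfl⟩
          exact ⟨b i, ⟨i, rfl⟩, rfl⟩
        · rintro ⟨_, ⟨i, rfl⟩, rfl⟩
          exact ⟨i, i.2, rfl⟩
      rw [hs, Submodule.span_image, b.span_eq, Submodule.map_top, Submodule.range_subtype]
  | succ m hdm ih =>
    intro hm
    obtain ⟨u, hli, hu, hspan⟩ := ih (by omega)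
    -- The kernel of `x ↦ (uᵢᵀ J x)ᵢ` is the symplectic orthogonal of the family.
    let φ := (Matrix.of u * Jmat k n).mulVecLin
    have hφ : ∀ x, φ x = 0 → ∀ i, u i ⬝ᵥ (Jmat k n).mulVec x = 0 := by
      intro x hx i
      have := congrFun hx i
      simpa [φ, ← mulVec_mulVec, mulVec] using this
    have hnot : ¬ LinearMap.ker φ ≤ Submodule.span k (Set.range u) := by
      intro hle
      have h1 := Submodule.finrank_mono hle
      have h2 := LinearMap.finrank_range_add_finrank_ker φ
      have h3 := (LinearMap.range φ).finrank_le
      rw [finrank_span_eq_card hli] at h1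
      simp only [Module.finrank_fin_fun, Fintype.card_fin] at h1 h2 h3
      omega
    obtain ⟨x, hxk, hxs⟩ := SetLike.not_le_iff_exists.mp hnot
    have hx := hφ x (LinearMap.mem_ker.mp hxk)
    refine ⟨Fin.snoc u x, linearIndependent_finSnoc.mpr ⟨hli, hxs⟩, ?_, ?_⟩
    · intro i j
      refine Fin.lastCases ?_ (fun i => ?_) i <;> refine Fin.lastCases ?_ (fun j => ?_) j
      · simp only [Fin.snoc_last]; exact form_self n x
      · simp only [Fin.snoc_last, Fin.snoc_castSucc]; rw [form_swap, hx, neg_zero]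
      · simp only [Fin.snoc_last, Fin.snoc_castSucc]; exact hx i
      · simp only [Fin.snoc_castSucc]; exact hu i j
    · rw [← hspan]
      congr 1
      ext v
      constructor
      · rintro ⟨i, hi, rfl⟩
        refine ⟨⟨i.1, by omega⟩, hi, ?_⟩
        exact Fin.snoc_castSucc (α := fun _ => Fin (2 * n) → k) x u ⟨i.1, by omega⟩
      · rintro ⟨i, hi, rfl⟩
        exact ⟨i.castSucc, hi, by rw [Fin.snoc_castSucc]⟩

/-- An isotropic subspace of dimension `d ≤ n` is spanned by the first `d` members of a basis of a
Lagrangian subspace. -/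
lemma exists_lagrangian_family (n d : ℕ) (hdn : d ≤ n) (U : Submodule k (Fin (2 * n) → k))
    (hU : Module.finrank k U = d) (hiso : IsIsotropic k n U) :
    ∃ u : Fin n → Fin (2 * n) → k, LinearIndependent k u ∧
      (∀ i j, u i ⬝ᵥ (Jmat k n).mulVec (u j) = 0) ∧
      Submodule.span k {v | ∃ i : Fin n, i.1 < d ∧ v = u i} = U :=
  exists_isotropic_family n d U hU hiso n hdn le_rfl

/-! ### Completion to a symplectic basis -/

/-- A basis of a Lagrangian subspace, given as the rows of `P`, is completed to a symplectic basis
by the columns of some `F`. -/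
lemma exists_dual_frame (n : ℕ) (P : Matrix (Fin n) (Fin (2 * n)) k)
    (hli : LinearIndependent k P.row) (hP : P * Jmat k n * Pᵀ = 0) :
    ∃ F : Matrix (Fin (2 * n)) (Fin n) k,
      P * Jmat k n * F = -1 ∧ Fᵀ * Jmat k n * Pᵀ = 1 ∧ Fᵀ * Jmat k n * F = 0 := by
  obtain ⟨Q, hQ⟩ : ∃ Q : Matrix (Fin (2 * n)) (Fin n) k, P * Q = 1 := by
    rw [← mulVec_surjective_iff_exists_right_inverse]
    have hr : Module.finrank k (LinearMap.range P.mulVecLin) = n := by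
      have := hli.rank_matrix
      simpa [Matrix.rank] using this
    have : LinearMap.range P.mulVecLin = ⊤ :=
      Submodule.eq_top_of_finrank_eq (by simpa using hr)
    exact LinearMap.range_eq_top.mp this
  -- Taking transposes exchanges the two mixed blocks up to sign.
  have key : ∀ F : Matrix (Fin (2 * n)) (Fin n) k, P * Jmat k n * F = -1 →
      Fᵀ * Jmat k n * Pᵀ = 1 := by
    intro F hF
    have := congrArg Matrix.transpose hF
    simp only [transpose_mul, Jmat_transpose, transpose_neg, transpose_one] at this
    rw [← neg_inj, ← this]
    simp [Matrix.mul_assoc]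
  have h0 : P * Jmat k n * (Jmat k n * Q) = -1 := by
    rw [Matrix.mul_assoc, ← Matrix.mul_assoc (Jmat k n), Jmat_sq]
    simp [hQ]
  set F₀ := Jmat k n * Q
  have h0' := key F₀ h0
  have hA : ∀ i j, (F₀ᵀ * Jmat k n * F₀) i j = F₀ᵀ i ⬝ᵥ (Jmat k n).mulVec (F₀ᵀ j) := by
    intro i j
    rw [Matrix.mul_assoc, Matrix.mul_apply]
    rfl
  obtain ⟨C, hC⟩ : ∃ C : Matrix (Fin n) (Fin n) k, F₀ᵀ * Jmat k n * F₀ = C - Cᵀ := by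
    refine ⟨Matrix.of fun i j => if i < j then (F₀ᵀ * Jmat k n * F₀) i j else 0, ?_⟩
    ext i j
    rw [Matrix.sub_apply, transpose_apply, of_apply, of_apply]
    rcases lt_trichotomy i j with h | h | h
    · rw [if_pos h, if_neg h.asymm, sub_zero]
    · subst h
      rw [hA, form_self, if_neg (lt_irrefl _), sub_zero]
    · rw [if_neg h.asymm, if_pos h, hA, hA, form_swap, zero_sub]
  have h1 : P * Jmat k n * (F₀ + Pᵀ * Cᵀ) = -1 := by
    rw [Matrix.mul_add, h0, ← Matrix.mul_assoc, hP]; simp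
  refine ⟨F₀ + Pᵀ * Cᵀ, h1, key _ h1, ?_⟩
  have e1 : (F₀ + Pᵀ * Cᵀ)ᵀ * Jmat k n * (F₀ + Pᵀ * Cᵀ) =
      F₀ᵀ * Jmat k n * F₀ + (F₀ᵀ * Jmat k n * Pᵀ) * Cᵀ + C * (P * Jmat k n * F₀)
        + C * (P * Jmat k n * Pᵀ) * Cᵀ := by
    simp only [transpose_add, transpose_mul, transpose_transpose, Matrix.mul_add, Matrix.add_mul,
      Matrix.mul_assoc]
    abel
  rw [e1, h0', h0, hP, hC]
  simp

/-! ### Coordinate subspaces and the orbit of `E_d` -/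

/-- The coordinate subspace `E_d` is isotropic for `d ≤ n`. -/
lemma isIsotropic_coordinate (n d : ℕ) (hdn : d ≤ n) :
    IsIsotropic k n
      (Submodule.span k {v | ∃ p : Fin (2 * n), p.1 < d ∧ v = Pi.single p (1 : k)}) := by
  intro u hu w hw
  induction hu using Submodule.span_induction with
  | zero => simp
  | add x y _ _ hx hy => rw [add_dotProduct, hx, hy, add_zero]
  | smul c x _ hx => rw [smul_dotProduct, hx, smul_zero]
  | mem x hx =>
    obtain ⟨p, hp, rfl⟩ := hx
    induction hw using Submodule.span_induction with
    | zero => simp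
    | add x y _ _ hx hy => rw [mulVec_add, dotProduct_add, hx, hy, add_zero]
    | smul c x _ hx => rw [mulVec_smul, dotProduct_smul, hx, smul_zero]
    | mem y hy =>
      obtain ⟨q, hq, rfl⟩ := hy
      simp only [mulVec_single_one, single_one_dotProduct, col_apply, Jmat, of_apply]
      rw [if_neg (by omega), if_neg (by omega)]

end

/-- For `1 ≤ d ≤ n` and a `d`-dimensional subspace `U ⊆ k^{2n}` (`k`
algebraically closed), there is `M ∈ Sp_{2n}(k)` with `M(E_d) = U` iff `U` is isotropic,
where `E_d = span(e_1,…,e_d)`. -/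
theorem stmt1 {k : Type*} [Field k] [IsAlgClosed k] (n d : ℕ) (hn : 1 ≤ n)
    (hd1 : 1 ≤ d) (hdn : d ≤ n)
    (U : Submodule k (Fin (2*n) → k)) (hU : Module.finrank k U = d) :
    (∃ M : Matrix (Fin (2*n)) (Fin (2*n)) k, IsUnit M.det ∧
        Mᵀ * Jmat k n * M = Jmat k n ∧
        Submodule.map M.mulVecLin
          (Submodule.span k {v | ∃ p : Fin (2*n), p.1 < d ∧ v = Pi.single p (1:k)}) = U)
      ↔ IsIsotropic k n U := by
  constructor
  · rintro ⟨M, -, hM, rfl⟩ u hu w hw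
    obtain ⟨a, ha, rfl⟩ := hu
    obtain ⟨b, hb, rfl⟩ := hw
    rw [mulVecLin_apply, mulVecLin_apply, ← vecMul_transpose, ← dotProduct_mulVec, mulVec_mulVec,
      mulVec_mulVec, hM]
    exact isIsotropic_coordinate n d hdn a ha b hb
  · intro hiso
    obtain ⟨u, hli, hu, hspan⟩ := exists_lagrangian_family n d hdn U hU hiso
    have hP : Matrix.of u * Jmat k n * (Matrix.of u)ᵀ = 0 := by
      ext i j
      rw [Matrix.mul_assoc, Matrix.mul_apply]
      exact hu i j
    obtain ⟨F, h12, h21, h22⟩ := exists_dual_frame n (Matrix.of u) hli hP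
    let N := fromCols (Matrix.of u)ᵀ F
    have hN : Nᵀ * Jmat k n * N = Matrix.J (Fin n) k := by
      rw [transpose_fromCols, fromRows_mul, transpose_transpose, fromRows_mul_fromCols,
        hP, h12, h21, h22, Matrix.J]
    have hM : (N.submatrix id (splitEquiv n).symm)ᵀ * Jmat k n *
        N.submatrix id (splitEquiv n).symm = Jmat k n := by
      conv_rhs => rw [Jmat_eq, ← hN]
      rfl
    refine ⟨N.submatrix id (splitEquiv n).symm, isUnit_det_of_symplectic n _ hM, hM, ?_⟩
    have hcol : ∀ i : Fin n,
        (N.submatrix id (splitEquiv n).symm).mulVec (Pi.single (splitEquiv n (Sum.inl i)) 1)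
          = u i := by
      intro i
      ext a
      simp [N]
    rw [Submodule.map_span, ← hspan]
    congr 1
    ext v
    constructor
    · rintro ⟨_, ⟨p, hp, rfl⟩, rfl⟩
      have hp' : p = splitEquiv n (Sum.inl ⟨p.1, by omega⟩) := by
        apply Fin.ext; rw [splitEquiv_inl]
      refine ⟨⟨p.1, by omega⟩, hp, ?_⟩
      rw [← hcol, ← hp']
      rfl
    · rintro ⟨i, hi, rfl⟩
      exact ⟨_, ⟨splitEquiv n (Sum.inl i), by rwa [splitEquiv_inl], rfl⟩, hcol i⟩
end

section
/- Let k be an algebraically closed field, 1 ≤ d ≤ n, and i ∈ I^{Sp}_{d,2n}. Let e_i = span(e_{i_1},…,e_{i_d}). Then the B-orbit {b·e_i : b ∈ B} equals the set of d-dimensional isotropic subspaces U of k^{2n} such that for every 1 ≤ t ≤ d, dim(U ∩ K_{i_t}) = t and dim(U ∩ K_{σ(i_t)}) < t. -/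
/-!
Reorder the standard basis as `e_1, …, e_n, e_{2n}, …, e_{n+1}`. The subspaces `K_a` become the
steps `F m` of a complete flag, `K_{σ(a)}` is the step just before `K_a`, a tuple in `I^{Sp}`
becomes strictly increasing, and the form `ω` becomes antidiagonal, so that `F m` and `F (2n - m)`
are orthogonal complements. The dimension conditions on `U` say that `dim (U ∩ F m)` jumps exactly
at the positions of `i_1, …, i_d`.

An element of `B` preserves `ω` and the flag: the first half of the flag by its triangular shape,
the second half by taking orthogonals (`map_F`). The subspace `e_i` satisfies the conditions, hence
so does every subspace in its orbit (`orbit_subset`).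

Conversely (`subset_orbit`), let `U` satisfy the conditions and let `I = {i_1, …, i_d}`. An element
of `B` carrying `e_i` to `U` is a symplectic basis `v_j` in which `v_j` has leading position `j`, and
`v_j ∈ U` for `j ∈ I`. Put `S_j = U` if `j ∈ I`, `S_j = U^⊥` if neither `j` nor its opposite index is
in `I`, and let `S_j` be the whole space otherwise. Each `S_j` contains a vector with leading
position `j`. For `U^⊥` this follows from the double orthogonal (`exists_lead_orthogonal`), because
`U`, having dimension `d`, has no leading position outside `I` (`card_le_finrank`). A symplectic
Gram–Schmidt process in the order of the flag (`gram_schmidt`) turns these vectors into the required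
basis without leaving the subspaces `S_j`: whenever a multiple of `v_{opp a}` would be subtracted
from a vector of `S_j`, either `S_j ⊥ S_a` and the coefficient is zero, or `S_{opp a} ⊆ S_j`.
-/

open Matrix BigOperators

namespace SpCell

/-! ### The reordered basis and the symplectic form -/

/-- The 0-indexed position of `e_p` in the reordered basis `e_1, …, e_n, e_{2n}, …, e_{n+1}`. In
this order the form `J` is antidiagonal and the subspaces `K_a` form a complete flag. -/
def pos {n : ℕ} (p : Fin (2*n)) : ℕ := if p.1 < n then p.1 else 3*n - 1 - p.1

/-- The index paired with `p` by the form: `opp` exchanges `t` and `n + t`. -/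
def opp {n : ℕ} (p : Fin (2*n)) : Fin (2*n) :=
  if h : p.1 < n then ⟨p.1 + n, by omega⟩ else ⟨p.1 - n, by omega⟩

/-- The sign of the nonzero entry in row `p` of `J`. -/
def sgn (k : Type*) [Field k] {n : ℕ} (p : Fin (2*n)) : k := if p.1 < n then -1 else 1

section
variable {k : Type*} [Field k] {n : ℕ}

lemma opp_val (p : Fin (2*n)) : (opp p).1 = if p.1 < n then p.1 + n else p.1 - n := by
  unfold opp; split_ifs <;> rfl

@[simp] lemma opp_opp (p : Fin (2*n)) : opp (opp p) = p := by
  apply Fin.ext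
  have := p.2
  rw [opp_val, opp_val]
  split_ifs <;> omega

lemma pos_lt (p : Fin (2*n)) : pos p < 2*n := by
  have := p.2
  unfold pos; split_ifs <;> omega

lemma pos_opp (p : Fin (2*n)) : pos (opp p) = 2*n - 1 - pos p := by
  have := p.2
  unfold pos; rw [opp_val]; split_ifs <;> omega

lemma pos_inj {p q : Fin (2*n)} (h : pos p = pos q) : p = q := by
  have := p.2
  have := q.2
  apply Fin.ext
  unfold pos at h; split_ifs at h <;> omega

lemma sgn_opp (p : Fin (2*n)) : sgn k (opp p) = - sgn k p := by
  have := p.2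
  unfold sgn; rw [opp_val]; split_ifs <;> first | omega | simp

lemma sgn_mul_self (p : Fin (2*n)) : sgn k p * sgn k p = 1 := by
  unfold sgn; split_ifs <;> simp

lemma sgn_ne_zero (p : Fin (2*n)) : sgn k p ≠ 0 := by
  unfold sgn; split_ifs <;> simp

lemma Jmat_apply (a b : Fin (2*n)) : Jmat k n a b = if b = opp a then sgn k a else 0 := by
  have := a.2
  have := b.2
  unfold Jmat sgn
  simp only [Matrix.of_apply, Fin.ext_iff, opp_val]
  split_ifs <;> first | rfl | omega

/-- The symplectic form `(u, w) ↦ uᵀ J w`. -/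
noncomputable def om (k : Type*) [Field k] (n : ℕ) :
    LinearMap.BilinForm k (Fin (2*n) → k) := Matrix.toBilin' (Jmat k n)

lemma om_eq (u w : Fin (2*n) → k) : om k n u w = u ⬝ᵥ (Jmat k n).mulVec w :=
  Matrix.toBilin'_apply' _ _ _

lemma om_apply (u w : Fin (2*n) → k) :
    om k n u w = ∑ p, sgn k p * u p * w (opp p) := by
  rw [om_eq, dotProduct]
  refine Finset.sum_congr rfl fun p _ => ?_
  simp only [Matrix.mulVec, dotProduct, Jmat_apply, ite_mul, zero_mul, Finset.sum_ite_eq',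
    Finset.mem_univ, if_true]
  ring

lemma om_isAlt : (om k n).IsAlt := by
  intro u
  rw [om_apply]
  refine Finset.sum_involution (fun p _ => opp p) ?_ ?_ ?_ ?_
  · intro p _
    rw [sgn_opp, opp_opp]; ring
  · intro p _ _ h
    have h1 := congrArg Fin.val h
    rw [opp_val] at h1
    have := p.2
    split_ifs at h1 <;> omega
  · simp
  · simp

lemma om_self (u : Fin (2*n) → k) : om k n u u = 0 := om_isAlt u

lemma om_swap (u w : Fin (2*n) → k) : om k n u w = - om k n w u :=
  (LinearMap.BilinForm.IsAlt.neg_eq om_isAlt w u).symm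

lemma om_single_left (p : Fin (2*n)) (w : Fin (2*n) → k) :
    om k n (Pi.single p 1) w = sgn k p * w (opp p) := by
  rw [om_apply, Finset.sum_eq_single p]
  · simp
  · intro q _ hq
    simp [hq]
  · simp

lemma om_nondegenerate : (om k n).Nondegenerate := by
  have hr : (om k n).IsRefl := om_isAlt.isRefl
  refine (LinearMap.IsRefl.nondegenerate_iff_separatingRight hr).2 ?_
  intro w hw
  funext p
  have := hw (Pi.single (opp p) 1)
  rw [om_single_left, opp_opp] at this
  exact (mul_eq_zero.1 this).resolve_left (sgn_ne_zero _)

/-! ### Coordinate subspaces, the flag and leading positions -/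

/-- `w` is a leading vector at `p`: its coordinate at `p` is `1` and its coordinates at later
positions vanish. -/
def Lead (p : Fin (2*n)) (w : Fin (2*n) → k) : Prop := w p = 1 ∧ ∀ q, pos p < pos q → w q = 0

/-- The coordinate subspace of vectors supported on `T`. -/
def C (k : Type*) [Field k] {n : ℕ} (T : Finset (Fin (2*n))) : Submodule k (Fin (2*n) → k) where
  carrier := {v | ∀ p, p ∉ T → v p = 0}
  add_mem' := fun {a b} ha hb p hp => by simp [ha p hp, hb p hp]
  zero_mem' := fun p _ => rfl
  smul_mem' := fun c a ha p hp => by simp [ha p hp]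

lemma mem_C {T : Finset (Fin (2*n))} {v : Fin (2*n) → k} :
    v ∈ C k T ↔ ∀ p, p ∉ T → v p = 0 := Iff.rfl

lemma single_mem_C {T : Finset (Fin (2*n))} {p : Fin (2*n)} (hp : p ∈ T) :
    (Pi.single p 1 : Fin (2*n) → k) ∈ C k T := by
  intro q hq
  rw [Pi.single_eq_of_ne]
  rintro rfl; exact hq hp

lemma C_eq_span (T : Finset (Fin (2*n))) :
    C k T = Submodule.span k (Set.range fun p : T => (Pi.single p.1 1 : Fin (2*n) → k)) := by
  apply le_antisymm
  · intro v hv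
    have : v = ∑ p, v p • (Pi.single p 1 : Fin (2*n) → k) := by
      simpa using (pi_eq_sum_univ' v)
    rw [this]
    refine Submodule.sum_mem _ fun p _ => ?_
    by_cases hp : p ∈ T
    · exact Submodule.smul_mem _ _ (Submodule.subset_span ⟨⟨p, hp⟩, rfl⟩)
    · rw [hv p hp, zero_smul]; exact Submodule.zero_mem _
  · rw [Submodule.span_le]
    rintro _ ⟨p, rfl⟩
    exact single_mem_C p.2

lemma finrank_C (T : Finset (Fin (2*n))) : Module.finrank k (C k T) = T.card := by
  rw [C_eq_span, finrank_span_eq_card]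
  · simp
  · exact (Pi.linearIndependent_single_one (Fin (2*n)) k).comp _ Subtype.val_injective

lemma C_inf (S T : Finset (Fin (2*n))) : C k S ⊓ C k T = C k (S ∩ T) := by
  ext v
  simp only [Submodule.mem_inf, mem_C, Finset.mem_inter]
  constructor
  · rintro ⟨h1, h2⟩ p hp
    by_cases h : p ∈ S
    · exact h2 p fun h' => hp ⟨h, h'⟩
    · exact h1 p h
  · intro h
    exact ⟨fun p hp => h p fun hq => hp hq.1, fun p hp => h p fun hq => hp hq.2⟩

/-- The `m`-dimensional step of the complete flag: vectors supported in positions `< m`. -/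
def F (k : Type*) [Field k] (n m : ℕ) : Submodule k (Fin (2*n) → k) :=
  C k (Finset.univ.filter fun p => pos p < m)

lemma mem_F {m : ℕ} {v : Fin (2*n) → k} : v ∈ F k n m ↔ ∀ p, m ≤ pos p → v p = 0 := by
  simp [F, mem_C]

lemma Kspace_eq {a m : ℕ}
    (h : ∀ p : Fin (2*n), ((p.1 < a ∧ p.1 < n) ∨ (n < a ∧ a ≤ p.1 + 1)) ↔ pos p < m) :
    Kspace k n a = F k n m := by
  unfold Kspace F
  rw [C_eq_span]
  congr 1
  ext v
  simp only [Set.mem_ofPred_eq, Set.mem_range, h, Subtype.exists, Finset.mem_filter,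
    Finset.mem_univ, true_and]
  constructor
  · rintro ⟨p, hp, rfl⟩; exact ⟨p, hp, rfl⟩
  · rintro ⟨p, hp, rfl⟩; exact ⟨p, hp, rfl⟩

lemma Kspace_succ (a : Fin (2*n)) : Kspace k n (a.1 + 1) = F k n (pos a + 1) := by
  refine Kspace_eq fun p => ?_
  have := a.2
  have := p.2
  unfold pos; split_ifs <;> omega

lemma Kspace_sigma (a : Fin (2*n)) : Kspace k n (sigmaFn n (a.1 + 1)) = F k n (pos a) := by
  refine Kspace_eq fun p => ?_
  have := a.2
  have := p.2
  unfold pos sigmaFn; split_ifs <;> omega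

lemma Lead.mem_F {p : Fin (2*n)} {w : Fin (2*n) → k} (h : Lead p w) : w ∈ F k n (pos p + 1) :=
  SpCell.mem_F.2 fun q hq => h.2 q hq

/-- Leading vectors at distinct positions are linearly independent, so the set of leading
positions of a subspace has at most as many elements as its dimension. -/
lemma card_le_finrank (U : Submodule k (Fin (2*n) → k)) (T : Finset (Fin (2*n)))
    (h : ∀ p ∈ T, ∃ w ∈ U, Lead p w) : T.card ≤ Module.finrank k U := by
  choose! g hgU hg using h
  have hli : LinearIndependent k (fun p : T => (⟨g p, hgU p p.2⟩ : U)) := by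
    rw [Fintype.linearIndependent_iff]
    intro c hc
    by_contra! hne
    classical
    -- evaluate the relation at the last leading position with nonzero coefficient
    obtain ⟨t, ht, hmax⟩ := Finset.exists_max_image
      (Finset.univ.filter fun p : T => c p ≠ 0) (fun p => pos p.1)
      (by obtain ⟨p, hp⟩ := hne; exact ⟨p, by simpa using hp⟩)
    have hct : c t ≠ 0 := by simpa using ht
    apply hct
    have h1 := congrFun (congrArg Subtype.val hc) t.1
    simp only [AddSubmonoidClass.coe_finsetSum, SetLike.val_smul, Finset.sum_apply,
      Pi.smul_apply, smul_eq_mul, ZeroMemClass.coe_zero, Pi.zero_apply] at h1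
    rw [Finset.sum_eq_single t] at h1
    · rwa [(hg t t.2).1, mul_one] at h1
    · intro s _ hs
      by_cases hcs : c s = 0
      · simp [hcs]
      · have h2 := hmax s (by simpa using hcs)
        have h3 : pos s.1 ≠ pos t.1 := fun h => hs (Subtype.ext (pos_inj h))
        rw [(hg s s.2).2 t.1 (lt_of_le_of_ne h2 h3), mul_zero]
    · simp
  simpa using hli.fintype_card_le_finrank

/-- Let `x`, `y` be leading vectors at `a`, `b`, where `pos a + pos b` is at most its value
`2n - 1` for `b = opp a`. Then `x` and `y` pair like the standard basis vectors `e_a` and `e_b`,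
because the form is antidiagonal in the reordered basis. -/
lemma om_lead {a b : Fin (2*n)} {x y : Fin (2*n) → k} (hx : Lead a x) (hy : Lead b y)
    (hab : pos a + pos b ≤ 2*n - 1) : om k n x y = Jmat k n a b := by
  have ha := pos_lt a
  rw [om_apply, Jmat_apply, Finset.sum_eq_single a]
  · rw [hx.1]
    split_ifs with h
    · rw [← h, hy.1]; ring
    · have h1 : pos (opp a) ≠ pos b := fun h' => h (pos_inj h').symm
      rw [hy.2 (opp a), mul_zero]
      rw [pos_opp] at *; omega
  · intro p _ hp
    have h1 : pos p ≠ pos a := fun h' => hp (pos_inj h')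
    have := pos_lt p
    by_cases h2 : pos a < pos p
    · rw [hx.2 p h2]; ring
    · rw [hy.2 (opp p), mul_zero]
      rw [pos_opp]; omega
  · simp

lemma Jmat_swap (a b : Fin (2*n)) : Jmat k n a b = - Jmat k n b a := by
  simp only [Jmat_apply]
  by_cases h : b = opp a
  · subst h; simp [sgn_opp]
  · have : a ≠ opp b := by rintro rfl; simp at h
    simp [h, this]

lemma Jmat_self (a : Fin (2*n)) : Jmat k n a a = 0 := by
  have := om_single_left (k := k) a (Pi.single a 1)
  rw [om_self] at this
  rw [Jmat_apply]
  split_ifs with h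
  · rw [← h] at this; simpa using this.symm
  · rfl


/-! ### Adapted symplectic bases -/

/-- Symplectic Gram–Schmidt along the flag. Leading vectors `w_j ∈ S j` are corrected, in order of
position, to a symplectic basis of leading vectors `v_j ∈ S j`. Making `v_j` orthogonal to an
earlier `v_a` means subtracting a multiple of `v_{opp a}` that is proportional to `ω(w_j, v_a)`;
the dichotomy `hS` says that either this multiple is zero or `v_{opp a}` lies in `S j`. -/
lemma gram_schmidt (S : Fin (2*n) → Submodule k (Fin (2*n) → k))
    (hex : ∀ j, ∃ w ∈ S j, Lead j w)
    (hS : ∀ j a, (∀ x ∈ S j, ∀ y ∈ S a, om k n x y = 0) ∨ S (opp a) ≤ S j) :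
    ∃ v : Fin (2*n) → Fin (2*n) → k,
      (∀ j, v j ∈ S j ∧ Lead j (v j)) ∧ ∀ j a, om k n (v j) (v a) = Jmat k n j a := by
  suffices H : ∀ m : ℕ, ∃ v : Fin (2*n) → Fin (2*n) → k,
      (∀ j, pos j < m → v j ∈ S j ∧ Lead j (v j)) ∧
      ∀ j a, pos j < m → pos a < m → om k n (v j) (v a) = Jmat k n j a by
    obtain ⟨v, h1, h2⟩ := H (2*n)
    exact ⟨v, fun j => h1 j (pos_lt j), fun j a => h2 j a (pos_lt j) (pos_lt a)⟩
  intro m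
  induction m with
  | zero => exact ⟨0, by simp, by simp⟩
  | succ m ih =>
    obtain ⟨v, hv, hJ⟩ := ih
    by_cases hm : ∃ j : Fin (2*n), pos j = m
    swap
    · have hlt : ∀ j : Fin (2*n), pos j < m + 1 → pos j < m := fun j hj =>
        lt_of_le_of_ne (Nat.lt_succ_iff.1 hj) fun h => hm ⟨j, h⟩
      exact ⟨v, fun j hj => hv j (hlt j hj), fun j a hj ha => hJ j a (hlt j hj) (hlt a ha)⟩
    obtain ⟨j, rfl⟩ := hm
    obtain ⟨w, hwS, hw⟩ := hex j
    -- only the vectors strictly between the positions of `opp j` and `j` need correcting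
    set A : Finset (Fin (2*n)) :=
      Finset.univ.filter fun a => pos (opp j) < pos a ∧ pos a < pos j with hA
    have hAmem : ∀ a, a ∈ A ↔ pos (opp j) < pos a ∧ pos a < pos j := fun a => by simp [hA]
    have hAopp : ∀ a ∈ A, opp a ∈ A := by
      intro a ha
      rw [hAmem] at *
      have := pos_lt j
      have := pos_lt a
      have := pos_opp j
      have := pos_opp a
      omega
    set x : Fin (2*n) → k :=
      w - ∑ a ∈ A, (om k n w (v a) * sgn k (opp a)) • v (opp a) with hx
    have hxS : x ∈ S j := by
      refine Submodule.sub_mem _ hwS (Submodule.sum_mem _ fun a ha => ?_)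
      rcases hS j a with h | h
      · rw [h w hwS (v a) (hv a ((hAmem a).1 ha).2).1, zero_mul, zero_smul]
        exact Submodule.zero_mem _
      · exact Submodule.smul_mem _ _ (h (hv _ ((hAmem _).1 (hAopp a ha)).2).1)
    have hxL : Lead j x := by
      have hz : ∀ q, pos j ≤ pos q →
          (∑ a ∈ A, (om k n w (v a) * sgn k (opp a)) • v (opp a)) q = 0 := by
        intro q hq
        rw [Finset.sum_apply]
        refine Finset.sum_eq_zero fun a ha => ?_
        have h1 := ((hAmem _).1 (hAopp a ha)).2
        rw [Pi.smul_apply, (hv _ h1).2.2 q (h1.trans_le hq), smul_zero]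
      refine ⟨?_, fun q hq => ?_⟩
      · rw [hx, Pi.sub_apply, hz j le_rfl, hw.1, sub_zero]
      · rw [hx, Pi.sub_apply, hz q hq.le, hw.2 q hq, sub_zero]
    have hxv : ∀ b, pos b < pos j → om k n x (v b) = Jmat k n j b := by
      intro b hb
      by_cases hbA : b ∈ A
      · have hne : b ≠ opp j := by
          rintro rfl
          exact absurd ((hAmem _).1 hbA).1 (lt_irrefl _)
        rw [Jmat_apply, if_neg hne, hx, map_sub, LinearMap.sub_apply, map_sum,
          LinearMap.sum_apply, Finset.sum_eq_single b]
        · rw [map_smul, LinearMap.smul_apply,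
            hJ _ _ ((hAmem _).1 (hAopp b hbA)).2 hb, Jmat_apply, opp_opp, if_pos rfl,
            smul_eq_mul, mul_assoc, sgn_mul_self, mul_one, sub_self]
        · intro a ha hab
          rw [map_smul, LinearMap.smul_apply,
            hJ _ _ ((hAmem _).1 (hAopp a ha)).2 hb, Jmat_apply, opp_opp,
            if_neg (Ne.symm hab), smul_zero]
        · exact fun h => absurd hbA h
      · refine om_lead hxL (hv b hb).2 ?_
        have h1 : ¬ (pos (opp j) < pos b) := fun h => hbA ((hAmem b).2 ⟨h, hb⟩)
        have := pos_lt j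
        rw [pos_opp] at h1
        omega
    have hne : ∀ b : Fin (2*n), pos b < pos j → b ≠ j := by
      rintro b hb rfl
      exact lt_irrefl _ hb
    have hcase : ∀ b : Fin (2*n), pos b < pos j + 1 → b = j ∨ pos b < pos j := by
      intro b hb
      rcases (Nat.lt_succ_iff.1 hb).eq_or_lt with h | h
      · exact Or.inl (pos_inj h)
      · exact Or.inr h
    refine ⟨Function.update v j x, ?_, ?_⟩
    · intro b hb
      rcases hcase b hb with rfl | h
      · rw [Function.update_self]; exact ⟨hxS, hxL⟩
      · rw [Function.update_of_ne (hne b h)]; exact hv b h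
    · intro b c hb hc
      rcases hcase b hb with rfl | h <;> rcases hcase c hc with rfl | hc'
      · rw [Function.update_self, om_self, Jmat_self]
      · rw [Function.update_self, Function.update_of_ne (hne c hc')]
        exact hxv c hc'
      · rw [Function.update_self, Function.update_of_ne (hne b h), om_swap, hxv b h,
          ← Jmat_swap]
      · rw [Function.update_of_ne (hne b h), Function.update_of_ne (hne c hc')]
        exact hJ b c h hc'

/-- The steps `F m` and `F (2n - m)` of the flag are orthogonal complements of each other. -/
lemma mem_F_iff_orth {m : ℕ} (hm : m ≤ 2*n) {v : Fin (2*n) → k} :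
    v ∈ F k n m ↔ ∀ u ∈ F k n (2*n - m), om k n u v = 0 := by
  constructor
  · intro hv u hu
    rw [om_apply]
    refine Finset.sum_eq_zero fun p _ => ?_
    have := pos_lt p
    by_cases h : 2*n - m ≤ pos p
    · rw [mem_F.1 hu p h]; ring
    · rw [mem_F.1 hv (opp p) (by rw [pos_opp]; omega), mul_zero]
  · intro h
    refine mem_F.2 fun p hp => ?_
    have := pos_lt p
    have h1 := h (Pi.single (opp p) 1) (single_mem_C (by
      simp only [Finset.mem_filter, Finset.mem_univ, true_and]
      rw [pos_opp]; omega))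
    rw [om_single_left, opp_opp] at h1
    exact (mul_eq_zero.1 h1).resolve_left (sgn_ne_zero _)

/-- A jump of `dim (W ∩ F m)` at `m = pos j` gives a vector of `W` leading at `j`. -/
lemma exists_lead {W : Submodule k (Fin (2*n) → k)} {j : Fin (2*n)}
    (h : ¬ W ⊓ F k n (pos j + 1) ≤ F k n (pos j)) : ∃ w ∈ W, Lead j w := by
  obtain ⟨w, hw, hw'⟩ := SetLike.not_le_iff_exists.1 h
  obtain ⟨hwW, hwF⟩ := Submodule.mem_inf.1 hw
  rw [mem_F] at hwF
  have hj : w j ≠ 0 := by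
    intro h0
    refine hw' (mem_F.2 fun p hp => ?_)
    rcases hp.eq_or_lt with h1 | h1
    · rw [← pos_inj h1]; exact h0
    · exact hwF p h1
  refine ⟨(w j)⁻¹ • w, W.smul_mem _ hwW, ?_, fun q hq => ?_⟩
  · simp [hj]
  · simp [hwF q hq]

/-- If no vector of `U` has leading position `opp j`, then `U^⊥` has a vector with leading
position `j`. This is the double orthogonal `(U + F_{2n-1-j})^⊥^⊥ = U + F_{2n-1-j}`. -/
lemma exists_lead_orthogonal {U : Submodule k (Fin (2*n) → k)} {j : Fin (2*n)}
    (h : ¬ ∃ u ∈ U, Lead (opp j) u) : ∃ w ∈ (om k n).orthogonal U, Lead j w := by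
  refine exists_lead fun hle => h ?_
  have hj := pos_lt j
  set W := U ⊔ F k n (2*n - (pos j + 1)) with hW
  have hW1 : (om k n).orthogonal W ≤ F k n (pos j) := by
    refine le_trans (fun w hw => ?_) hle
    rw [LinearMap.BilinForm.mem_orthogonal_iff] at hw
    refine ⟨?_, ?_⟩
    · exact LinearMap.BilinForm.mem_orthogonal_iff.2 fun u hu =>
        hw u (Submodule.mem_sup_left hu)
    · exact (mem_F_iff_orth (by omega)).2 fun u hu => hw u (Submodule.mem_sup_right hu)
  have hmem : (Pi.single (opp j) 1 : Fin (2*n) → k) ∈ W := by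
    rw [← LinearMap.BilinForm.orthogonal_orthogonal om_nondegenerate om_isAlt.isRefl W]
    refine LinearMap.BilinForm.mem_orthogonal_iff.2 fun w hw => ?_
    rw [om_swap, om_single_left, opp_opp, mem_F.1 (hW1 hw) j le_rfl, mul_zero, neg_zero]
  obtain ⟨u, hu, f, hf, huf⟩ := Submodule.mem_sup.1 hmem
  have hu' : ∀ q, pos (opp j) ≤ pos q → u q = (Pi.single (opp j) 1 : Fin (2*n) → k) q := by
    intro q hq
    rw [← huf, Pi.add_apply, mem_F.1 hf q (by rw [pos_opp] at hq; omega), add_zero]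
  refine ⟨u, hu, ?_, fun q hq => ?_⟩
  · rw [hu' _ le_rfl, Pi.single_eq_same]
  · rw [hu' _ hq.le, Pi.single_eq_of_ne]
    rintro rfl; exact lt_irrefl _ hq

/-! ### The orbit of the coordinate subspace -/

lemma pos_strictMono {d : ℕ} {i : Fin d → Fin (2*n)} (hi : IsSpTuple n i) :
    StrictMono fun t => pos (i t) := by
  obtain ⟨⟨-, r, -, h1, h2, h3, h4⟩, -⟩ := hi
  intro s t hst
  have h5 := (i s).2
  have h6 := (i t).2
  have hst' : s.1 < t.1 := hst
  show pos (i s) < pos (i t)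
  unfold pos
  by_cases ht : t.1 < r
  · have := h1 s t hst ht
    have := h2 t ht
    have := h2 s (by omega)
    rw [if_pos (by omega), if_pos (by omega)]
    omega
  · have := h4 t (by omega)
    by_cases hs : s.1 < r
    · have := h2 s hs
      rw [if_pos (by omega), if_neg (by omega)]
      omega
    · have := h4 s (by omega)
      have := h3 s t hst (by omega)
      rw [if_neg (by omega), if_neg (by omega)]
      omega

lemma ne_opp {d : ℕ} {i : Fin d → Fin (2*n)} (hi : IsSpTuple n i) (s t : Fin d) :
    i s ≠ opp (i t) := by
  intro h
  have h1 := congrArg Fin.val h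
  rw [opp_val] at h1
  split_ifs at h1
  · exact hi.2 t s h1
  · exact hi.2 s t (by omega)

lemma eSpan_eq {d : ℕ} (i : Fin d → Fin (2*n)) :
    eSpan k i = C k (Finset.univ.image i) := by
  rw [C_eq_span, eSpan]
  congr 1
  ext v
  simp

lemma om_map {M : Matrix (Fin (2*n)) (Fin (2*n)) k} (hM : Mᵀ * Jmat k n * M = Jmat k n)
    (u w : Fin (2*n) → k) : om k n (M.mulVecLin u) (M.mulVecLin w) = om k n u w := by
  simp only [om_eq, Matrix.mulVecLin_apply]
  conv_rhs => rw [← hM]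
  rw [← Matrix.mulVec_mulVec, ← Matrix.mulVec_mulVec, Matrix.dotProduct_mulVec u,
    Matrix.vecMul_transpose]

lemma mulVecLin_injective {M : Matrix (Fin (2*n)) (Fin (2*n)) k}
    (hM : Mᵀ * Jmat k n * M = Jmat k n) : Function.Injective M.mulVecLin := by
  rw [← LinearMap.ker_eq_bot, LinearMap.ker_eq_bot']
  intro w hw
  refine om_nondegenerate.1 w fun u => ?_
  rw [← om_map hM, hw, map_zero, LinearMap.zero_apply]

lemma finrank_map_of_inj {M : Matrix (Fin (2*n)) (Fin (2*n)) k}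
    (hM : Function.Injective M.mulVecLin) (W : Submodule k (Fin (2*n) → k)) :
    Module.finrank k (W.map M.mulVecLin) = Module.finrank k W :=
  (Submodule.equivMapOfInjective _ hM W).finrank_eq.symm

/-- Elements of `B` preserve the flag. For the first half this is the block triangular shape; for
the second half it follows by taking orthogonals. -/
lemma map_F {M : Matrix (Fin (2*n)) (Fin (2*n)) k} (hM : inB k n M) {m : ℕ} (hm : m ≤ 2*n) :
    (F k n m).map M.mulVecLin = F k n m := by
  have hinj := mulVecLin_injective hM.1
  suffices h : (F k n m).map M.mulVecLin ≤ F k n m from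
    Submodule.eq_of_le_of_finrank_le h (finrank_map_of_inj hinj _).ge
  have half : ∀ l ≤ n, (F k n l).map M.mulVecLin ≤ F k n l := by
    intro l hl
    rw [Submodule.map_le_iff_le_comap]
    intro v hv
    refine mem_F.2 fun p hp => ?_
    rw [Matrix.mulVecLin_apply, Matrix.mulVec, dotProduct]
    refine Finset.sum_eq_zero fun q _ => ?_
    by_cases hq : l ≤ pos q
    · rw [mem_F.1 hv q hq, mul_zero]
    · rw [hM.2 p q, zero_mul]
      have := p.2
      have := q.2
      unfold pos at hp hq
      split_ifs at hp hq <;> omega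
  by_cases hmn : m ≤ n
  · exact half m hmn
  rw [Submodule.map_le_iff_le_comap]
  intro v hv
  refine (mem_F_iff_orth hm).2 fun u hu => ?_
  have heq := Submodule.eq_of_le_of_finrank_le (half (2*n - m) (by omega))
    (finrank_map_of_inj hinj _).ge
  rw [← heq] at hu
  obtain ⟨u', hu', rfl⟩ := hu
  rw [om_map hM.1]
  exact (mem_F_iff_orth hm).1 hv u' hu'

lemma finrank_eSpan_inf {d : ℕ} {i : Fin d → Fin (2*n)} (hi : Function.Injective i) (m : ℕ) :
    Module.finrank k ↥(eSpan k i ⊓ F k n m) =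
      (Finset.univ.filter fun t => pos (i t) < m).card := by
  rw [eSpan_eq, F, C_inf, finrank_C, ← Finset.card_image_of_injective _ hi]
  congr 1
  ext p
  simp only [Finset.mem_inter, Finset.mem_image, Finset.mem_univ, true_and, Finset.mem_filter]
  constructor
  · rintro ⟨⟨t, rfl⟩, h⟩; exact ⟨t, h, rfl⟩
  · rintro ⟨t, h, rfl⟩; exact ⟨⟨t, rfl⟩, h⟩

/-- Every point of the `B`-orbit of `e_i` satisfies the isotropy and dimension conditions. -/
lemma orbit_subset {d : ℕ} {i : Fin d → Fin (2*n)} (hi : IsSpTuple n i)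
    {M : Matrix (Fin (2*n)) (Fin (2*n)) k} (hM : inB k n M) :
    IsIsotropic k n ((eSpan k i).map M.mulVecLin) ∧
    Module.finrank k ((eSpan k i).map M.mulVecLin) = d ∧
    ∀ t : Fin d,
      Module.finrank k ↥((eSpan k i).map M.mulVecLin ⊓ Kspace k n ((i t).1 + 1)) = t.1 + 1 ∧
      Module.finrank k ↥((eSpan k i).map M.mulVecLin ⊓ Kspace k n (sigmaFn n ((i t).1 + 1)))
        < t.1 + 1 := by
  have hinj := mulVecLin_injective hM.1
  have hmono := pos_strictMono hi
  refine ⟨?_, ?_, fun t => ?_⟩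
  · rintro _ ⟨u, hu, rfl⟩ _ ⟨w, hw, rfl⟩
    rw [← om_eq, om_map hM.1, om_apply]
    rw [SetLike.mem_coe, eSpan_eq, mem_C] at hu hw
    refine Finset.sum_eq_zero fun p _ => ?_
    by_cases hp : p ∈ Finset.univ.image i
    · rw [hw (opp p), mul_zero]
      intro hp'
      obtain ⟨s, -, rfl⟩ := Finset.mem_image.1 hp
      obtain ⟨t, -, ht⟩ := Finset.mem_image.1 hp'
      exact ne_opp hi t s ht
    · rw [hu p hp]; ring
  · rw [finrank_map_of_inj hinj, eSpan_eq, finrank_C, Finset.card_image_of_injective _ hi.1.1]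
    simp
  · have key : ∀ m ≤ 2*n, Module.finrank k ↥((eSpan k i).map M.mulVecLin ⊓ F k n m) =
        (Finset.univ.filter fun s => pos (i s) < m).card := by
      intro m hm
      rw [← finrank_eSpan_inf (k := k) hi.1.1 m, ← finrank_map_of_inj hinj (eSpan k i ⊓ F k n m),
        Submodule.map_inf _ hinj, map_F hM hm]
    have hlt := pos_lt (i t)
    rw [Kspace_succ, Kspace_sigma, key _ (by omega), key _ (by omega)]
    have h1 : (Finset.univ.filter fun s => pos (i s) < pos (i t) + 1) = Finset.Iic t := by
      ext s
      simp [hmono.le_iff_le]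
    have h2 : (Finset.univ.filter fun s => pos (i s) < pos (i t)) = Finset.Iio t := by
      ext s
      simp [hmono.lt_iff_lt]
    rw [h1, h2, Fin.card_Iic, Fin.card_Iio]
    exact ⟨rfl, Nat.lt_succ_self _⟩

/-! ### Subspaces with the prescribed jumps lie in the orbit -/

/-- The element of `B` has as columns a symplectic basis of leading vectors in which those at
`i_1, …, i_d` span `U`. -/
lemma subset_orbit {d : ℕ} {i : Fin d → Fin (2*n)} (hi : IsSpTuple n i)
    {U : Submodule k (Fin (2*n) → k)} (hiso : IsIsotropic k n U)
    (hrank : Module.finrank k U = d)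
    (hdim : ∀ t : Fin d,
      Module.finrank k ↥(U ⊓ Kspace k n ((i t).1 + 1)) = t.1 + 1 ∧
      Module.finrank k ↥(U ⊓ Kspace k n (sigmaFn n ((i t).1 + 1))) < t.1 + 1) :
    ∃ M : Matrix (Fin (2*n)) (Fin (2*n)) k,
      inB k n M ∧ U = Submodule.map M.mulVecLin (eSpan k i) := by
  classical
  set I : Finset (Fin (2*n)) := Finset.univ.image i with hI
  have hIcard : I.card = d := by
    rw [hI, Finset.card_image_of_injective _ hi.1.1]; simp
  have hUU : ∀ x ∈ U, ∀ y ∈ U, om k n x y = 0 := fun x hx y hy => by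
    rw [om_eq]; exact hiso x hx y hy
  have hIopp : ∀ p ∈ I, opp p ∉ I := by
    intro p hp hp'
    obtain ⟨s, -, rfl⟩ := Finset.mem_image.1 hp
    obtain ⟨t, -, ht⟩ := Finset.mem_image.1 hp'
    exact ne_opp hi t s ht
  have hleadI : ∀ p ∈ I, ∃ w ∈ U, Lead p w := by
    intro p hp
    obtain ⟨t, -, rfl⟩ := Finset.mem_image.1 hp
    refine exists_lead fun hle => ?_
    obtain ⟨h1, h2⟩ := hdim t
    rw [Kspace_succ] at h1
    rw [Kspace_sigma] at h2
    have := Submodule.finrank_mono (le_inf inf_le_left hle :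
      U ⊓ F k n (pos (i t) + 1) ≤ U ⊓ F k n (pos (i t)))
    omega
  -- a further leading position would exceed the dimension of `U`
  have hleadI' : ∀ p, p ∉ I → ¬ ∃ w ∈ U, Lead p w := by
    intro p hp hex
    have := card_le_finrank U (insert p I) (by
      intro q hq
      rcases Finset.mem_insert.1 hq with rfl | hq
      · exact hex
      · exact hleadI q hq)
    rw [Finset.card_insert_of_notMem hp, hIcard, hrank] at this
    omega
  set P := (om k n).orthogonal U with hP
  have hUP : U ≤ P := fun x hx =>
    LinearMap.BilinForm.mem_orthogonal_iff.2 fun y hy => hUU y hy x hx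
  have hUP0 : ∀ x ∈ U, ∀ y ∈ P, om k n x y = 0 := fun x hx y hy =>
    LinearMap.BilinForm.mem_orthogonal_iff.1 hy x hx
  have hPU0 : ∀ x ∈ P, ∀ y ∈ U, om k n x y = 0 := fun x hx y hy => by
    rw [om_swap, hUP0 y hy x hx, neg_zero]
  -- For `j ∉ I` with `opp j ∉ I` the basis vector must lie in `U^⊥`: then correcting the vectors of
  -- `U` by `gram_schmidt` never leaves `U`.
  set S : Fin (2*n) → Submodule k (Fin (2*n) → k) := fun j =>
    if j ∈ I then U else if opp j ∈ I then ⊤ else P with hSdef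
  obtain ⟨v, hv, hvJ⟩ := gram_schmidt S (by
      intro j
      simp only [hSdef]
      split_ifs with h1 h2
      · exact hleadI j h1
      · refine ⟨Pi.single j 1, Submodule.mem_top, Pi.single_eq_same _ _, fun q hq => ?_⟩
        rw [Pi.single_eq_of_ne]
        rintro rfl; exact lt_irrefl _ hq
      · exact exists_lead_orthogonal (hleadI' _ h2)) (by
      intro j a
      simp only [hSdef, opp_opp]
      by_cases ha : a ∈ I
      · simp only [ha, hIopp a ha, if_true, if_false]
        split_ifs
        exacts [Or.inl hUU, Or.inr le_rfl, Or.inl hPU0]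
      · by_cases ha' : opp a ∈ I
        · simp only [ha', if_true]
          split_ifs
          exacts [Or.inr le_rfl, Or.inr le_top, Or.inr hUP]
        · simp only [ha, ha', if_false]
          split_ifs
          exacts [Or.inl hUP0, Or.inr le_top, Or.inr le_rfl])
  set M : Matrix (Fin (2*n)) (Fin (2*n)) k := Matrix.of fun p j => v j p with hMdef
  have hMs : ∀ j, M.mulVecLin (Pi.single j 1) = v j := by
    intro j
    rw [Matrix.mulVecLin_apply, Matrix.mulVec_single_one]
    rfl
  refine ⟨M, ⟨?_, ?_⟩, ?_⟩
  · ext a b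
    rw [← hvJ a b, om_eq, Matrix.mul_assoc, Matrix.mul_apply]
    rfl
  · intro a b hab
    refine (hv b).2.2 a ?_
    have := a.2
    unfold pos
    split_ifs <;> omega
  · symm
    have hle : Submodule.map M.mulVecLin (eSpan k i) ≤ U := by
      rw [Submodule.map_le_iff_le_comap, eSpan, Submodule.span_le]
      rintro _ ⟨t, rfl⟩
      show M.mulVecLin (Pi.single (i t) 1) ∈ U
      rw [hMs]
      have h1 := (hv (i t)).1
      have h2 : i t ∈ I := Finset.mem_image_of_mem _ (Finset.mem_univ t)
      simpa only [hSdef, h2, if_true] using h1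
    refine Submodule.eq_of_le_of_finrank_le hle ?_
    refine (hrank.trans hIcard.symm).le.trans
      (card_le_finrank _ _ fun p hp => ⟨v p, ?_, (hv p).2⟩)
    rw [← hMs]
    refine Submodule.mem_map_of_mem ?_
    rw [eSpan_eq]
    exact single_mem_C hp

end
end SpCell

/-- for `1 ≤ d ≤ n` and `i ∈ I^{Sp}_{d,2n}`, the `B`-orbit
`{b·e_i : b ∈ B}` of `e_i = span(e_{i_1},…,e_{i_d})` equals the set of `d`-dimensional
isotropic subspaces `U ⊆ k^{2n}` with `dim(U ∩ K_{i_t}) = t` and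
`dim(U ∩ K_{σ(i_t)}) < t` for all `1 ≤ t ≤ d`. -/
theorem stmt8 {k : Type*} [Field k] [IsAlgClosed k] (n d : ℕ) (hd1 : 1 ≤ d) (hdn : d ≤ n)
    (i : Fin d → Fin (2*n)) (hi : IsSpTuple n i) :
    {V : Submodule k (Fin (2*n) → k) |
        ∃ M : Matrix (Fin (2*n)) (Fin (2*n)) k,
          inB k n M ∧ V = Submodule.map M.mulVecLin (eSpan k i)}
      = {U : Submodule k (Fin (2*n) → k) |
          IsIsotropic k n U ∧ Module.finrank k U = d ∧
          ∀ t : Fin d,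
            Module.finrank k ↥(U ⊓ Kspace k n ((i t).1 + 1)) = t.1 + 1 ∧
            Module.finrank k ↥(U ⊓ Kspace k n (sigmaFn n ((i t).1 + 1))) < t.1 + 1} := by
  ext U
  constructor
  · rintro ⟨M, hM, rfl⟩
    exact SpCell.orbit_subset hi hM
  · rintro ⟨hiso, hrank, hdim⟩
    exact SpCell.subset_orbit hi hiso hrank hdim
end

section
/- Let k be an algebraically closed field, 1 ≤ d ≤ n, i ∈ I^{Sp}_{d,2n} and j ∈ \overline{I}^{Sp}_{d,2n}. Then i ≥^{Sp} j holds if and only if there exists a 2n×d matrix M over k of rank d whose column span U is isotropic and satisfies dim(U ∩ K_{i_t}) ≥ t for all 1 ≤ t ≤ d (i.e. U lies in the Schubert variety X_i), such that the Plücker coordinate p_{S(j)}(M) ≠ 0, where S(j) is the underlying d-element set of j. (Proposition: p_j restricted to X_i is nonzero if and only if i ≥^{Sp} j.) -/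
/-!
Order `{1,…,2n}` by `1 ≺ … ≺ n ≺ 2n ≺ … ≺ n+1`. The tuples are the `≺`-increasing enumerations of
`d`-element sets, `K_a` is spanned by the `e_b` with `b ⪯ a`, and `i ≥ j` means `j_t ⪯ i_t` for
all `t`.

If `p_j(U) ≠ 0`, then the coordinates in `j` are injective on `U`. Were `j_t ⪯ i_t` false, only
the `t - 1` coordinates `j_1, …, j_{t-1}` could be nonzero on `U ∩ K_{i_t}`, whose dimension is at
least `t` (`spGE_of_det`).

Conversely, let `i ≥ j`. If `j` contains no pair `{p, n+p}`, the coordinate subspace `e_j` is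
isotropic and lies in `X_i` (`exists_of_no_pair`). In general one inducts on the number of pairs
in `j`. Given a pair `{p, n+p} ⊆ j`, there is a `q` with `q, n+q ∉ j` such that the tuple `j'`
obtained from `j` by replacing `p` with `q` (if `p < q`) or `n+p` with `n+q` (if `q < p`) still
satisfies `i ≥ j'` (`exists_move`). This is where `i` containing no pair is used: the excess
`s ↦ #(j ∩ ([1,s] ∪ [n+1,n+s])) - #(i ∩ ([1,s] ∪ [n+1,n+s]))` is a walk from `0` to `0` which
rises at `p` and descends only at such `q`. By induction there is `U ∈ X_i` with `p_{j'}(U) ≠ 0`.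
The root element of the Borel subgroup mixing the coordinates `p, q` and `n+p, n+q` preserves
`X_i` and sends `U` to a subspace with `p_j = p_j(U) ± p_{j'}(U)` (`exists_of_update`), so `p_j`
is nonzero either at `U` or at its image.
-/

open Matrix BigOperators

/-! ### Coordinate description of the flag -/

/-- `p` (0-indexed) indexes one of the basis vectors spanning `K_a` (with `a` 1-indexed). In the
order `1 ≺ … ≺ n ≺ 2n ≺ … ≺ n+1` this says that `p` weakly precedes `a`. -/
def InFlag (n a p : ℕ) : Prop := (p < a ∧ p < n) ∨ (n < a ∧ a ≤ p + 1)

lemma mem_Kspace {k : Type*} [Field k] {n a : ℕ} (x : Fin (2*n) → k) :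
    x ∈ Kspace k n a ↔ ∀ p : Fin (2*n), ¬ InFlag n a p.1 → x p = 0 := by
  constructor
  · intro hx p hp
    unfold Kspace at hx
    induction hx using Submodule.span_induction with
    | mem x hx =>
      obtain ⟨q, hq, rfl⟩ := hx
      rw [Pi.single_apply, if_neg]
      rintro rfl
      exact hp hq
    | zero => rfl
    | add x y _ _ h1 h2 => simp [h1, h2]
    | smul c x _ h1 => simp [h1]
  · intro h
    rw [pi_eq_sum_univ' x]
    refine Submodule.sum_mem _ fun p _ => ?_
    by_cases hp : InFlag n a p.1
    · refine Submodule.smul_mem _ _ (Submodule.subset_span ⟨p, hp, ?_⟩)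
      ext q
      simp [Pi.single_apply, eq_comm]
    · simp [h p hp]

/-! ### Plücker coordinates and arbitrary enumerations of the rows -/

/-- Reordering the rows only changes the sign, so nonvanishing of the Plücker coordinate can be
tested on the rows in the order in which the tuple lists them. -/
lemma pluckerT_ne_zero_iff {k : Type*} [Field k] {n d : ℕ} (M : Matrix (Fin (2*n)) (Fin d) k)
    (j : Fin d → Fin (2*n)) (hj : Function.Injective j) :
    pluckerT M j ≠ 0 ↔ (M.submatrix j id).det ≠ 0 := by
  have hS : (Finset.image j Finset.univ).card = d := by
    rw [Finset.card_image_of_injective _ hj]; simp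
  unfold pluckerT pluckerS
  rw [dif_pos hS]
  set e := (Finset.image j Finset.univ).orderIsoOfFin hS with he
  let f : Fin d → Fin d := fun t => e.symm ⟨j t, by simp⟩
  have hf : Function.Injective f := by
    intro a b hab
    have := e.symm.injective hab
    exact hj (congrArg Subtype.val this)
  let σ : Equiv.Perm (Fin d) := Equiv.ofBijective f (Finite.injective_iff_bijective.mp hf)
  have hσ : M.submatrix j id =
      (M.submatrix (fun a => (e a : Fin (2*n))) id).submatrix σ id := by
    ext a b
    simp [σ, f]
  rw [hσ, Matrix.det_permute]
  rcases Int.units_eq_one_or (Equiv.Perm.sign σ) with h | h <;> simp [h]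

lemma mulVec_injective_of_det {k : Type*} [Field k] {n d : ℕ} (M : Matrix (Fin (2*n)) (Fin d) k)
    (j : Fin d → Fin (2*n)) (h : (M.submatrix j id).det ≠ 0) (v : Fin d → k)
    (hv : ∀ t, (M *ᵥ v) (j t) = 0) : v = 0 := by
  apply Matrix.eq_zero_of_mulVec_eq_zero h
  ext t
  exact hv t

lemma rank_of_det {k : Type*} [Field k] {n d : ℕ} (M : Matrix (Fin (2*n)) (Fin d) k)
    (j : Fin d → Fin (2*n)) (h : (M.submatrix j id).det ≠ 0) : M.rank = d := by
  have hinj : Function.Injective M.mulVecLin := by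
    rw [injective_iff_map_eq_zero]
    intro v hv
    apply mulVec_injective_of_det M j h
    intro t
    exact congrFun hv (j t)
  rw [Matrix.rank, LinearMap.finrank_range_of_inj hinj]
  simp

/-! ### Nonvanishing implies the order relation -/

/-- If `j_t` does not weakly precede `i_t`, then neither does any later `j_s`, so the `t + 1`
dimensional space `U ∩ K_{i_t}` is embedded in `k^t` by its coordinates `j_1, …, j_t`. -/
lemma spGE_of_det {k : Type*} [Field k] {n d : ℕ} (i j : Fin d → Fin (2*n))
    (hj : IsSpBarTuple n j) (M : Matrix (Fin (2*n)) (Fin d) k)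
    (hflag : ∀ t : Fin d, t.1 + 1 ≤
      Module.finrank k ↥(LinearMap.range M.mulVecLin ⊓ Kspace k n ((i t).1 + 1)))
    (hdet : (M.submatrix j id).det ≠ 0) : spGE n i j := by
  intro t
  by_contra hcon
  have hout : ∀ s : Fin d, t ≤ s → ¬ InFlag n ((i t).1 + 1) (j s).1 := by
    obtain ⟨-, r, hr, h1, h2, h3, h4⟩ := hj
    intro s hs
    have hts : t = s ∨ t < s := eq_or_lt_of_le hs
    unfold InFlag
    by_cases hjt : (j t).1 < n
    · rw [if_pos hjt, Fin.le_def] at hcon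
      rcases hts with rfl | hts
      · omega
      · by_cases hsr : s.1 < r
        · have := h1 t s hts hsr
          rw [Fin.lt_def] at this
          omega
        · have := h4 s (by omega)
          omega
    · rw [if_neg hjt, Fin.le_def] at hcon
      have htr : r ≤ t.1 := by
        by_contra h
        exact hjt (h2 t (by omega))
      have h5 := h4 s (by rw [Fin.le_def] at hs; omega)
      rcases hts with rfl | hts
      · omega
      · have := h3 t s hts htr
        rw [Fin.lt_def] at this
        omega
  let W := LinearMap.range M.mulVecLin ⊓ Kspace k n ((i t).1 + 1)
  let L : W →ₗ[k] (Fin t.1 → k) :=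
    (LinearMap.pi fun s : Fin t.1 =>
      LinearMap.proj (R := k) (φ := fun _ => k) (j ⟨s.1, s.2.trans t.2⟩)) ∘ₗ W.subtype
  have hL : Function.Injective L := by
    rw [injective_iff_map_eq_zero]
    rintro ⟨x, ⟨v, rfl⟩, hxK⟩ hx
    have hv : v = 0 := by
      apply mulVec_injective_of_det M j hdet
      intro s
      by_cases hs : s.1 < t.1
      · exact congrFun hx ⟨s.1, hs⟩
      · exact (mem_Kspace _).mp hxK (j s) (hout s (by rw [Fin.le_def]; omega))
    subst hv
    ext
    simp
  have h1 := LinearMap.finrank_le_finrank_of_injective hL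
  have h2 := hflag t
  rw [Module.finrank_fin_fun] at h1
  exact absurd (h2.trans h1) (by omega)

/-! ### The symplectic root subgroups -/

/-- The root element of `Sp_{2n}` adding `c` times coordinate `b` to coordinate `a` and
subtracting `c` times coordinate `a'` from coordinate `b'`, where `a' = n + a`, `b' = n + b`. -/
def rootMap (k : Type*) [Field k] {m : ℕ} (a b a' b' : Fin m) (c : k) :
    (Fin m → k) →ₗ[k] (Fin m → k) where
  toFun x := x + Pi.single a (c * x b) - Pi.single b' (c * x a')
  map_add' x y := by
    simp only [Pi.add_apply, mul_add, Pi.single_add]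
    abel
  map_smul' r x := by
    ext p
    simp only [Pi.add_apply, Pi.sub_apply, Pi.smul_apply, Pi.single_apply, smul_eq_mul,
      RingHom.id_apply]
    split_ifs <;> ring

lemma rootMap_apply {k : Type*} [Field k] {m : ℕ} (a b a' b' : Fin m) (c : k)
    (x : Fin m → k) (p : Fin m) : rootMap k a b a' b' c x p =
      x p + (if p = a then c * x b else 0) - (if p = b' then c * x a' else 0) := by
  simp [rootMap, Pi.single_apply]

lemma rootMap_injective {k : Type*} [Field k] {m : ℕ} {a b a' b' : Fin m} (c : k)
    (h1 : b ≠ a) (h2 : b ≠ b') (h3 : a' ≠ a) (h4 : a' ≠ b') :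
    Function.Injective (rootMap k a b a' b' c) := by
  rw [injective_iff_map_eq_zero]
  intro x hx
  have hp : ∀ p, x p + (if p = a then c * x b else 0) - (if p = b' then c * x a' else 0) = 0 := by
    intro p
    rw [← rootMap_apply, hx]; rfl
  have hb := hp b
  have ha := hp a'
  rw [if_neg h1, if_neg h2] at hb
  rw [if_neg h3, if_neg h4] at ha
  have hb' : x b = 0 := by simpa using hb
  have ha' : x a' = 0 := by simpa using ha
  ext p
  simpa [hb', ha'] using hp p

lemma Jmat_mulVec_low {k : Type*} [Field k] {n : ℕ} {a a' : Fin (2*n)} (h : a'.1 = n + a.1)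
    (y : Fin (2*n) → k) : (Jmat k n *ᵥ y) a = - y a' := by
  rw [Matrix.mulVec, dotProduct, Finset.sum_eq_single a']
  · simp [Jmat, h, add_comm]
  · intro b _ hb
    have h1 : ¬ (a.1 + n = b.1) := fun h' => hb (Fin.ext (by omega))
    have h2 : ¬ (b.1 + n = a.1) := by omega
    simp [Jmat, h1, h2]
  · simp

lemma Jmat_mulVec_high {k : Type*} [Field k] {n : ℕ} {a a' : Fin (2*n)} (h : a'.1 = n + a.1)
    (y : Fin (2*n) → k) : (Jmat k n *ᵥ y) a' = y a := by
  rw [Matrix.mulVec, dotProduct, Finset.sum_eq_single a]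
  · have h1 : ¬ (a'.1 + n = a.1) := by omega
    have h2 : a.1 + n = a'.1 := by omega
    simp [Jmat, h1, h2]
  · intro b _ hb
    have h1 : ¬ (b.1 + n = a'.1) := fun h' => hb (Fin.ext (by omega))
    have h2 : ¬ (a'.1 + n = b.1) := by omega
    simp [Jmat, h1, h2]
  · simp

lemma dot_Jmat_single_low {k : Type*} [Field k] {n : ℕ} {a a' : Fin (2*n)} (h : a'.1 = n + a.1)
    (x : Fin (2*n) → k) (r : k) : x ⬝ᵥ (Jmat k n *ᵥ Pi.single a r) = x a' * r := by
  rw [dotProduct, Finset.sum_eq_single a']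
  · rw [Jmat_mulVec_high h, Pi.single_eq_same]
  · intro b _ hb
    have h1 : ¬ (a.1 + n = b.1) := fun h' => hb (Fin.ext (by omega))
    have h2 : ¬ (b.1 + n = a.1) := by omega
    simp [Matrix.mulVec_single, Jmat, h1, h2]
  · simp

lemma dot_Jmat_single_high {k : Type*} [Field k] {n : ℕ} {a a' : Fin (2*n)} (h : a'.1 = n + a.1)
    (x : Fin (2*n) → k) (r : k) : x ⬝ᵥ (Jmat k n *ᵥ Pi.single a' r) = - (x a * r) := by
  rw [dotProduct, Finset.sum_eq_single a]
  · rw [Jmat_mulVec_low h, Pi.single_eq_same]; ring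
  · intro b _ hb
    have h1 : ¬ (b.1 + n = a'.1) := fun h' => hb (Fin.ext (by omega))
    have h2 : ¬ (a'.1 + n = b.1) := by omega
    simp [Matrix.mulVec_single, Jmat, h1, h2]
  · simp

lemma rootMap_symplectic {k : Type*} [Field k] {n : ℕ} {a b a' b' : Fin (2*n)} (c : k)
    (ha : a'.1 = n + a.1) (hb : b'.1 = n + b.1) (hab : a ≠ b) (x y : Fin (2*n) → k) :
    rootMap k a b a' b' c x ⬝ᵥ (Jmat k n *ᵥ rootMap k a b a' b' c y) =
      x ⬝ᵥ (Jmat k n *ᵥ y) := by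
  have hab' : a' ≠ b' := by
    intro h; apply hab; ext; rw [h] at ha; omega
  have e1 : b ≠ b' := by intro h; rw [← h] at hb; have := b.2; omega
  have hx : ∀ z, rootMap k a b a' b' c z =
    z + Pi.single a (c * z b) - Pi.single b' (c * z a') := fun _ => rfl
  have h1 : a' ≠ a := by intro h; rw [h] at ha; have := a.2; omega
  rw [hx x, hx y]
  simp only [Matrix.mulVec_add, Matrix.mulVec_sub, dotProduct_add, dotProduct_sub, add_dotProduct,
    sub_dotProduct, dot_Jmat_single_low ha, dot_Jmat_single_high hb, single_dotProduct,
    Jmat_mulVec_low ha, Jmat_mulVec_high hb, Pi.add_apply, Pi.sub_apply, Pi.single_apply]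
  simp only [h1, hab', hab.symm, e1, if_false]
  ring

/-! ### Transporting points of the Schubert variety -/

/-- The columns of `M` span an isotropic subspace satisfying the incidence conditions of `X_i`
(the rank condition is kept separate). -/
def InSchubert {k : Type*} [Field k] {n d : ℕ} (i : Fin d → Fin (2*n))
    (M : Matrix (Fin (2*n)) (Fin d) k) : Prop :=
  IsIsotropic k n (LinearMap.range M.mulVecLin) ∧
    ∀ t : Fin d, t.1 + 1 ≤
      Module.finrank k ↥(LinearMap.range M.mulVecLin ⊓ Kspace k n ((i t).1 + 1))

/-- Root elements with `a < b` lie in the Borel subgroup, hence preserve `X_i`. -/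
lemma exists_rootMap_inSchubert {k : Type*} [Field k] {n d : ℕ} {i : Fin d → Fin (2*n)}
    {M : Matrix (Fin (2*n)) (Fin d) k} (hM : InSchubert i M) {a b a' b' : Fin (2*n)} (c : k)
    (ha : a'.1 = n + a.1) (hb : b'.1 = n + b.1) (hab : a < b) :
    InSchubert i (LinearMap.toMatrix' (rootMap k a b a' b' c) * M) := by
  have hbn : b.1 < n := by have := b'.2; omega
  have hlt : a.1 < b.1 := hab
  set T := rootMap k a b a' b' c with hT
  have hTinj : Function.Injective T := by
    apply rootMap_injective <;> (intro h; have := congrArg Fin.val h; omega)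
  have hrange : LinearMap.range (LinearMap.toMatrix' T * M).mulVecLin =
      (LinearMap.range M.mulVecLin).map T := by
    rw [Matrix.mulVecLin_mul, LinearMap.range_comp]
    congr 1
    exact Matrix.toLin'_toMatrix' T
  unfold InSchubert
  rw [hrange]
  refine ⟨?_, fun t => (hM.2 t).trans ?_⟩
  · rintro _ ⟨x, hx, rfl⟩ _ ⟨y, hy, rfl⟩
    rw [hT, rootMap_symplectic c ha hb hab.ne]
    exact hM.1 x hx y hy
  · rw [(Submodule.equivMapOfInjective T hTinj _).finrank_eq]
    apply Submodule.finrank_mono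
    rintro _ ⟨x, ⟨hxU, hxK⟩, rfl⟩
    refine ⟨⟨x, hxU, rfl⟩, ?_⟩
    rw [SetLike.mem_coe, mem_Kspace] at hxK ⊢
    intro p hp
    rw [hT, rootMap_apply, hxK p hp]
    have h1 : p = a → x b = 0 := by
      rintro rfl
      apply hxK
      unfold InFlag at hp ⊢
      omega
    have h2 : p = b' → x a' = 0 := by
      rintro rfl
      apply hxK
      unfold InFlag at hp ⊢
      omega
    split_ifs with h3 h4 h4 <;> simp_all

/-! ### Counting entries of tuples -/

/-- The number of entries of the tuple `j` in the interval `[l, h)`. -/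
def cnt {m d : ℕ} (j : Fin d → Fin m) (l h : ℕ) : ℕ :=
  (Finset.univ.filter fun t => l ≤ (j t).1 ∧ (j t).1 < h).card

lemma cnt_self {m d : ℕ} (j : Fin d → Fin m) (l : ℕ) : cnt j l l = 0 := by
  unfold cnt
  rw [Finset.card_eq_zero, Finset.filter_eq_empty_iff]
  intro t _
  omega

open Classical in
lemma cnt_succ {m d : ℕ} (j : Fin d → Fin m) (hj : Function.Injective j) (l h : ℕ) (hlh : l ≤ h) :
    cnt j l (h+1) = cnt j l h + if ∃ t, (j t).1 = h then 1 else 0 := by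
  unfold cnt
  split_ifs with hex
  · obtain ⟨t0, ht0⟩ := hex
    rw [← Finset.card_insert_of_notMem (a := t0)]
    · congr 1
      ext t
      simp only [Finset.mem_filter, Finset.mem_univ, true_and, Finset.mem_insert]
      have : t = t0 ↔ (j t).1 = h := by
        rw [← ht0, Fin.val_inj, hj.eq_iff]
      rw [this]
      omega
    · simp
      omega
  · rw [add_zero]
    congr 1
    ext t
    have : (j t).1 ≠ h := fun h' => hex ⟨t, h'⟩
    simp only [Finset.mem_filter, Finset.mem_univ, true_and]
    omega

lemma cnt_update {m d : ℕ} (j : Fin d → Fin m) (t0 : Fin d) (q : Fin m) (l h : ℕ) :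
    cnt (Function.update j t0 q) l h + (if l ≤ (j t0).1 ∧ (j t0).1 < h then 1 else 0)
      = cnt j l h + if l ≤ q.1 ∧ q.1 < h then 1 else 0 := by
  unfold cnt
  rw [Finset.card_filter, Finset.card_filter,
    ← Finset.add_sum_erase _ _ (Finset.mem_univ t0),
    ← Finset.add_sum_erase (a := t0) Finset.univ
      (fun t => if l ≤ (j t).1 ∧ (j t).1 < h then 1 else 0) (Finset.mem_univ t0)]
  rw [Finset.sum_congr rfl (g := fun t => if l ≤ (j t).1 ∧ (j t).1 < h then 1 else 0)]
  · simp only [Function.update_self]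
    omega
  · intro t ht
    rw [Function.update_of_ne (Finset.ne_of_mem_erase ht)]

lemma cnt_total {n d : ℕ} (j : Fin d → Fin (2*n)) : cnt j 0 n + cnt j n (n+n) = d := by
  unfold cnt
  rw [← Finset.card_union_of_disjoint]
  · rw [← Finset.filter_or, Finset.filter_true_of_mem]
    · simp
    · intro t _
      have := (j t).2
      omega
  · rw [Finset.disjoint_filter]
    intro t _
    omega

/-- The relation `i ≥ j` expressed through the underlying sets only: `j` has at least as many
entries as `i` in every initial segment of `1 ≺ … ≺ n ≺ 2n ≺ … ≺ n+1`. For segments reaching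
beyond `n` this is stated for the complementary intervals. -/
def CntGE (n : ℕ) {d : ℕ} (i j : Fin d → Fin (2*n)) : Prop :=
  ∀ s ≤ n, cnt i 0 s ≤ cnt j 0 s ∧ cnt j n (n+s) ≤ cnt i n (n+s)

lemma cntGE_of_spGE {n d : ℕ} {i j : Fin d → Fin (2*n)} (h : spGE n i j) : CntGE n i j := by
  intro s hs
  constructor
  · apply Finset.card_le_card
    intro t
    simp only [Finset.mem_filter, Finset.mem_univ, true_and]
    have := h t
    split_ifs at this with h1 <;> simp only [Fin.le_def] at this <;> omega
  · apply Finset.card_le_card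
    intro t
    simp only [Finset.mem_filter, Finset.mem_univ, true_and]
    have := h t
    split_ifs at this with h1 <;> simp only [Fin.le_def] at this <;> omega

/-- An integer walk that is positive at `a` and nonpositive at a later time `b` has a first
descent to a nonpositive value. -/
lemma exists_first_descent (g : ℕ → ℤ) (a b : ℕ) (hab : a ≤ b) (ha : 1 ≤ g a) (hb : g b ≤ 0) :
    ∃ q, a ≤ q ∧ q < b ∧ g (q+1) < g q ∧ ∀ t, a ≤ t → t ≤ q → 1 ≤ g t := by
  classical
  have hex : ∃ t, a ≤ t ∧ g t ≤ 0 := ⟨b, hab, hb⟩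
  obtain ⟨hm1, hm2⟩ := Nat.find_spec hex
  have hle : Nat.find hex ≤ b := Nat.find_min' hex ⟨hab, hb⟩
  have hne : Nat.find hex ≠ a := by
    intro h'; rw [h'] at hm2; omega
  have hmin : ∀ s, a ≤ s → s < Nat.find hex → 1 ≤ g s := by
    intro s hs hs'
    have := Nat.find_min hex hs'
    by_contra h'
    exact this ⟨hs, by omega⟩
  refine ⟨Nat.find hex - 1, by omega, by omega, ?_, fun s hs hs' => hmin s hs (by omega)⟩
  have h5 := hmin (Nat.find hex - 1) (by omega) (by omega)
  have : Nat.find hex - 1 + 1 = Nat.find hex := by omega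
  rw [this]
  omega

/-- Time-reversed companion of `exists_first_descent`. -/
lemma exists_last_descent (g : ℕ → ℤ) (b : ℕ) (h0 : 0 ≤ g 0) (hb : g b ≤ -1) :
    ∃ q, q < b ∧ g (q+1) < g q ∧ ∀ t, q < t → t ≤ b → g t ≤ -1 := by
  induction b with
  | zero => omega
  | succ b ih =>
    by_cases h : g b ≤ -1
    · obtain ⟨q, h1, h2, h3⟩ := ih h
      refine ⟨q, by omega, h2, fun t ht ht' => ?_⟩
      rcases Nat.lt_or_ge b t with h4 | h4
      · have : t = b + 1 := by omega
        rw [this]; exact hb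
      · exact h3 t ht h4
    · refine ⟨b, by omega, by omega, fun t ht ht' => ?_⟩
      have : t = b + 1 := by omega
      rw [this]; exact hb

/-- The combinatorial heart: if `j` contains the pair `{p, n+p}`, there is a `q` with neither `q`
nor `n+q` in `j` such that one entry of the pair can be moved up without leaving `i ≥ j`. The
excess of `j` over `i` in `[1, s] ∪ [n+1, n+s]` is a walk from `0` to `0` that rises at `p`, and,
`i` containing no pair, descends only at such `q`. -/
lemma exists_move {n d : ℕ} {i j : Fin d → Fin (2*n)} (hi : Function.Injective i)
    (hi2 : ∀ a b : Fin d, (i b).1 ≠ (i a).1 + n) (hj : Function.Injective j)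
    (h : CntGE n i j) (p : ℕ) (hp : p < n) (hp1 : ∃ t, (j t).1 = p) (hp2 : ∃ t, (j t).1 = n + p) :
    ∃ q < n, (∀ t, (j t).1 ≠ q) ∧ (∀ t, (j t).1 ≠ n + q) ∧
      ((p < q ∧ ∀ s, p < s → s ≤ q → cnt i 0 s < cnt j 0 s) ∨
       (q < p ∧ ∀ s, q < s → s ≤ p → cnt j n (n+s) < cnt i n (n+s))) := by
  classical
  let g : ℕ → ℤ := fun s => cnt j 0 s + cnt j n (n+s) - cnt i 0 s - cnt i n (n+s)
  have hstep : ∀ s, g (s+1) = g s + (if ∃ t, (j t).1 = s then 1 else 0)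
      + (if ∃ t, (j t).1 = n + s then 1 else 0) - (if ∃ t, (i t).1 = s then 1 else 0)
      - (if ∃ t, (i t).1 = n + s then 1 else 0) := by
    intro s
    simp only [g]
    rw [cnt_succ j hj 0 s (by omega), cnt_succ i hi 0 s (by omega), ← add_assoc n s 1,
      cnt_succ j hj n (n+s) (by omega), cnt_succ i hi n (n+s) (by omega)]
    push_cast
    ring
  have hnot : ∀ s, ¬ ((∃ t, (i t).1 = s) ∧ (∃ t, (i t).1 = n + s)) := by
    rintro s ⟨⟨a, ha⟩, b, hb⟩
    exact hi2 a b (by omega)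
  have hdesc : ∀ s, g (s+1) < g s → (∀ t, (j t).1 ≠ s) ∧ (∀ t, (j t).1 ≠ n + s) := by
    intro s hs
    rw [hstep] at hs
    have h1 := hnot s
    have h2 : (¬ ∃ t, (j t).1 = s) ∧ (¬ ∃ t, (j t).1 = n + s) := by
      split_ifs at hs <;> first | (exfalso; omega) | (constructor <;> assumption) | tauto
    exact ⟨fun t ht => h2.1 ⟨t, ht⟩, fun t ht => h2.2 ⟨t, ht⟩⟩
  have hg0 : g 0 = 0 := by simp [g, cnt_self]
  have hgn : g n = 0 := by
    have h1 := cnt_total i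
    have h2 := cnt_total j
    simp only [g]
    omega
  have hgp : g p + 1 ≤ g (p+1) := by
    rw [hstep, if_pos hp1, if_pos hp2]
    have h1 := hnot p
    split_ifs <;> first | (exfalso; tauto) | omega
  rcases le_or_gt 1 (g (p+1)) with h1 | h1
  · obtain ⟨q, hq1, hq2, hq3, hq4⟩ := exists_first_descent g (p+1) n (by omega) h1 (by omega)
    obtain ⟨hd1, hd2⟩ := hdesc q hq3
    refine ⟨q, hq2, hd1, hd2, Or.inl ⟨by omega, fun s hs hs' => ?_⟩⟩
    have h3 := hq4 s (by omega) hs'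
    have h4 := h s (by omega)
    simp only [g] at h3
    omega
  · obtain ⟨q, hq2, hq3, hq4⟩ := exists_last_descent g p (by omega) (by omega)
    obtain ⟨hd1, hd2⟩ := hdesc q hq3
    refine ⟨q, by omega, hd1, hd2, Or.inr ⟨by omega, fun s hs hs' => ?_⟩⟩
    have h3 := hq4 s (by omega) hs'
    have h4 := h s (by omega)
    simp only [g] at h3
    omega

/-! ### Construction of points with nonvanishing Plücker coordinate -/

lemma card_inFlag_le {n d : ℕ} {i j : Fin d → Fin (2*n)} (h : CntGE n i j) (a : ℕ) (ha : a < 2*n)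
    [DecidablePred (InFlag n (a+1))] :
    (Finset.univ.filter fun t => InFlag n (a+1) (i t).1).card ≤
      (Finset.univ.filter fun t => InFlag n (a+1) (j t).1).card := by
  by_cases han : a < n
  · have key : ∀ f : Fin d → Fin (2*n),
        (Finset.univ.filter fun t => InFlag n (a+1) (f t).1).card = cnt f 0 (a+1) := by
      intro f
      unfold cnt
      congr 1
      ext t
      simp only [Finset.mem_filter, Finset.mem_univ, true_and]
      unfold InFlag
      omega
    rw [key, key]
    exact (h (a+1) (by omega)).1
  · have key : ∀ f : Fin d → Fin (2*n),
        (Finset.univ.filter fun t => InFlag n (a+1) (f t).1).card + cnt f n (n + (a-n)) = d := by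
      intro f
      have h1 := Finset.card_filter_add_card_filter_not (s := (Finset.univ : Finset (Fin d)))
        (fun t => InFlag n (a+1) (f t).1)
      rw [Finset.card_univ, Fintype.card_fin] at h1
      have h2 : cnt f n (n + (a-n)) =
          (Finset.univ.filter fun t => ¬ InFlag n (a+1) (f t).1).card := by
        unfold cnt
        congr 1
        ext t
        have := (f t).2
        simp only [Finset.mem_filter, Finset.mem_univ, true_and]
        unfold InFlag
        omega
      rw [h2, h1]
    have h1 := key i
    have h2 := key j
    have h3 := (h (a-n) (by omega)).2
    omega

lemma succ_le_card_inFlag {n d : ℕ} {i : Fin d → Fin (2*n)} (hi : IsSpBarTuple n i) (t : Fin d)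
    [DecidablePred (InFlag n ((i t).1+1))] :
    t.1 + 1 ≤ (Finset.univ.filter fun s => InFlag n ((i t).1+1) (i s).1).card := by
  rw [← Fin.card_Iic t]
  apply Finset.card_le_card
  obtain ⟨-, r, hr, h1, h2, h3, h4⟩ := hi
  intro s hs
  rw [Finset.mem_Iic] at hs
  rw [Finset.mem_filter]
  refine ⟨Finset.mem_univ _, ?_⟩
  unfold InFlag
  have hst : s.1 ≤ t.1 := hs
  rcases eq_or_lt_of_le hs with rfl | hlt
  · omega
  · by_cases htr : t.1 < r
    · have h5 := h1 s t hlt htr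
      have h6 := h2 t htr
      rw [Fin.lt_def] at h5
      omega
    · have h6 := h4 t (by omega)
      by_cases hsr : s.1 < r
      · have := h2 s hsr
        omega
      · have h5 := h3 s t hlt (by omega)
        rw [Fin.lt_def] at h5
        omega

/-- If `j` contains no pair, the coordinate subspace `e_j` is a point of `X_i` with `p_j ≠ 0`. -/
lemma exists_of_no_pair (k : Type*) [Field k] {n d : ℕ} {i j : Fin d → Fin (2*n)}
    (hi : IsSpBarTuple n i) (hj : Function.Injective j)
    (hj2 : ∀ a b : Fin d, (j b).1 ≠ (j a).1 + n) (h : CntGE n i j) :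
    ∃ M : Matrix (Fin (2*n)) (Fin d) k, InSchubert i M ∧ (M.submatrix j id).det ≠ 0 := by
  classical
  let M : Matrix (Fin (2*n)) (Fin d) k := Matrix.of fun p t => if p = j t then 1 else 0
  have hcol : ∀ t, M *ᵥ Pi.single t 1 = Pi.single (j t) 1 := by
    intro t
    ext p
    simp [M, Pi.single_apply]
  have hzero : ∀ x ∈ LinearMap.range M.mulVecLin, ∀ p, (∀ t, p ≠ j t) → x p = 0 := by
    rintro _ ⟨v, rfl⟩ p hp
    simp only [Matrix.mulVecLin_apply, Matrix.mulVec, dotProduct]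
    apply Finset.sum_eq_zero
    intro t _
    simp [M, hp t]
  refine ⟨M, ⟨?_, ?_⟩, ?_⟩
  · intro x hx y hy
    simp only [dotProduct, Matrix.mulVec, Finset.mul_sum]
    refine Finset.sum_eq_zero fun a _ => Finset.sum_eq_zero fun b _ => ?_
    by_cases ha : ∀ t, a ≠ j t
    · simp [hzero x hx a ha]
    by_cases hb : ∀ t, b ≠ j t
    · simp [hzero y hy b hb]
    push Not at ha hb
    obtain ⟨s, rfl⟩ := ha
    obtain ⟨t, rfl⟩ := hb
    have h1 : ¬ ((j s).1 + n = (j t).1) := fun h' => hj2 s t h'.symm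
    have h2 : ¬ ((j t).1 + n = (j s).1) := fun h' => hj2 t s h'.symm
    simp [Jmat, h1, h2]
  · intro t
    refine ((succ_le_card_inFlag hi t).trans (card_inFlag_le h _ (i t).2)).trans ?_
    rw [← Fintype.card_subtype]
    let f : {s // InFlag n ((i t).1+1) (j s).1} →
        ↥(LinearMap.range M.mulVecLin ⊓ Kspace k n ((i t).1 + 1)) := fun s =>
      ⟨Pi.single (j s.1) 1, ⟨Pi.single s.1 1, hcol s.1⟩,
        Submodule.subset_span ⟨j s.1, s.2, rfl⟩⟩
    have hf : LinearIndependent k f := by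
      apply LinearIndependent.of_comp (Submodule.subtype _)
      have heq : Submodule.subtype _ ∘ f = Pi.basisFun k (Fin (2*n)) ∘
          fun s : {s // InFlag n ((i t).1+1) (j s).1} => j s.1 := by
        funext s
        simp [f]
      rw [heq]
      exact (Pi.basisFun k (Fin (2*n))).linearIndependent.comp _ (hj.comp Subtype.val_injective)
    exact hf.fintype_card_le_finrank
  · have : M.submatrix j id = 1 := by
      ext a b
      simp [M, Matrix.one_apply, hj.eq_iff]
    rw [this]
    simp

/-- If the root element changes, among the rows of `j`, only the row `j_t` and adds to it `c ≠ 0`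
times row `q`, then `p_j` of the image is `p_j + c p_{j'}` with `j' = j[t ↦ q]`. Hence `p_j` is
nonzero at one of the two points. -/
lemma exists_of_update {k : Type*} [Field k] {n d : ℕ} {i j : Fin d → Fin (2*n)}
    {M : Matrix (Fin (2*n)) (Fin d) k} (hM : InSchubert i M) (t : Fin d) (q : Fin (2*n))
    (hdet : (M.submatrix (Function.update j t q) id).det ≠ 0)
    {a b a' b' : Fin (2*n)} (c e : k) (he : e ≠ 0)
    (ha : a'.1 = n + a.1) (hb : b'.1 = n + b.1) (hab : a < b)
    (hrow : ∀ x : Fin (2*n) → k, rootMap k a b a' b' c x (j t) = x (j t) + e * x q)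
    (hrow' : ∀ x : Fin (2*n) → k, ∀ s ≠ t, rootMap k a b a' b' c x (j s) = x (j s)) :
    ∃ M : Matrix (Fin (2*n)) (Fin d) k, InSchubert i M ∧ (M.submatrix j id).det ≠ 0 := by
  by_cases h0 : (M.submatrix j id).det = 0
  swap
  · exact ⟨M, hM, h0⟩
  refine ⟨_, exists_rootMap_inSchubert hM c ha hb hab, ?_⟩
  set T := rootMap k a b a' b' c
  have hent : ∀ p s, (LinearMap.toMatrix' T * M) p s = T (fun r => M r s) p := by
    intro p s
    rw [← LinearMap.toMatrix'_mulVec]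
    rfl
  have hmat : (LinearMap.toMatrix' T * M).submatrix j id =
      (M.submatrix j id).updateRow t (M.submatrix j id t + e • M q) := by
    ext s r
    rw [Matrix.submatrix_apply, hent]
    by_cases hs : s = t
    · subst hs
      simp [T, hrow]
    · rw [Matrix.updateRow_ne hs]
      simp [T, hrow' _ s hs]
  have hmat2 : M.submatrix (Function.update j t q) id = (M.submatrix j id).updateRow t (M q) := by
    ext s r
    by_cases hs : s = t
    · subst hs
      simp
    · rw [Matrix.updateRow_ne hs]
      simp [Function.update_of_ne hs]
  have hself : (M.submatrix j id).updateRow t (M.submatrix j id t) = M.submatrix j id :=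
    Matrix.updateRow_eq_self _ _
  rw [hmat, Matrix.det_updateRow_add, Matrix.det_updateRow_smul, hself, h0, zero_add, ← hmat2]
  exact mul_ne_zero he hdet

/-- Induction on the number of pairs contained in `j`, each step being `exists_move` followed by
`exists_of_update`. -/
lemma exists_of_cntGE (k : Type*) [Field k] {n d : ℕ} {i : Fin d → Fin (2*n)}
    (hi : IsSpTuple n i) (N : ℕ) : ∀ j : Fin d → Fin (2*n), Function.Injective j →
      CntGE n i j → (Finset.univ.filter fun t => ∃ t', (j t').1 = (j t).1 + n).card = N →
      ∃ M : Matrix (Fin (2*n)) (Fin d) k, InSchubert i M ∧ (M.submatrix j id).det ≠ 0 := by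
  induction N using Nat.strong_induction_on with
  | _ N ih =>
  intro j hj h hN
  by_cases hpair : ∀ a b : Fin d, (j b).1 ≠ (j a).1 + n
  · exact exists_of_no_pair k hi.1 hj hpair h
  push Not at hpair
  obtain ⟨t0, t1, h01⟩ := hpair
  have hp : (j t0).1 < n := by have := (j t1).2; omega
  have hne01 : t0 ≠ t1 := by rintro rfl; omega
  obtain ⟨q, hqn, hq1, hq2, hcase⟩ := exists_move hi.1.1 hi.2 hj h (j t0).1 hp ⟨t0, rfl⟩
    ⟨t1, by omega⟩
  -- replacing the entry at `t` by `x ∉ j` keeps the tuple injective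
  have hinj : ∀ (t : Fin d) (x : Fin (2*n)), (∀ s, (j s).1 ≠ x.1) →
      Function.Injective (Function.update j t x) := by
    intro t x hx s s' hss
    by_cases h1 : s = t <;> by_cases h2 : s' = t
    · rw [h1, h2]
    · rw [h1, Function.update_self, Function.update_of_ne h2] at hss
      exact absurd (congrArg Fin.val hss.symm) (hx s')
    · rw [h2, Function.update_self, Function.update_of_ne h1] at hss
      exact absurd (congrArg Fin.val hss) (hx s)
    · rw [Function.update_of_ne h1, Function.update_of_ne h2] at hss
      exact hj hss
  let q0 : Fin (2*n) := ⟨q, by omega⟩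
  let q1 : Fin (2*n) := ⟨n + q, by omega⟩
  have hval : ∀ (t : Fin d) (x : Fin (2*n)) s, (Function.update j t x s).1 =
      if s = t then x.1 else (j s).1 := by
    intro t x s
    rw [Function.update_apply]
    split_ifs <;> rfl
  rcases hcase with ⟨hpq, hc⟩ | ⟨hqp, hc⟩
  · have hcnt : CntGE n i (Function.update j t0 q0) := by
      intro s hs
      have e1 := cnt_update j t0 q0 0 s
      have e2 := cnt_update j t0 q0 n (n+s)
      have e3 := h s hs
      have e4 := hc s
      rw [show q0.1 = q from rfl] at e1 e2
      split_ifs at e1 e2 <;> omega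
    have hlt : (Finset.univ.filter fun t => ∃ t', (Function.update j t0 q0 t').1 =
        (Function.update j t0 q0 t).1 + n).card < N := by
      rw [← hN]
      apply Finset.card_lt_card
      rw [Finset.ssubset_iff_of_subset]
      · refine ⟨t0, by simpa using ⟨t1, h01⟩, ?_⟩
        simp only [Finset.mem_filter, Finset.mem_univ, true_and, hval, if_true, q0, not_exists]
        intro s
        have := hq2 s
        split_ifs <;> omega
      · intro t
        simp only [Finset.mem_filter, Finset.mem_univ, true_and, hval, q0]
        rintro ⟨s, hs⟩
        have := hq2 s
        split_ifs at hs
        · omega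
        · omega
        · omega
        · exact ⟨s, hs⟩
    obtain ⟨M, hM, hdet⟩ := ih _ hlt _ (hinj t0 q0 hq1) hcnt rfl
    refine exists_of_update hM t0 q0 hdet (a := j t0) (b := q0) (a' := j t1) (b' := q1) 1 1
      one_ne_zero (by omega) rfl hpq ?_ ?_
    · intro x
      have : j t0 ≠ q1 := fun h' => hq2 t0 (congrArg Fin.val h')
      simp [rootMap_apply, this]
    · intro x s hs
      have h1 : j s ≠ q1 := fun h' => hq2 s (congrArg Fin.val h')
      have h2 : j s ≠ j t0 := fun h' => hs (hj h')
      simp [rootMap_apply, h1, h2]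
  · have hcnt : CntGE n i (Function.update j t1 q1) := by
      intro s hs
      have e1 := cnt_update j t1 q1 0 s
      have e2 := cnt_update j t1 q1 n (n+s)
      have e3 := h s hs
      have e4 := hc s
      rw [show q1.1 = n + q from rfl] at e1 e2
      split_ifs at e1 e2 <;> omega
    have hlt : (Finset.univ.filter fun t => ∃ t', (Function.update j t1 q1 t').1 =
        (Function.update j t1 q1 t).1 + n).card < N := by
      rw [← hN]
      apply Finset.card_lt_card
      rw [Finset.ssubset_iff_of_subset]
      · refine ⟨t0, by simpa using ⟨t1, h01⟩, ?_⟩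
        simp only [Finset.mem_filter, Finset.mem_univ, true_and, hval, hne01, if_false, q1,
          not_exists]
        intro s hs
        split_ifs at hs with h1
        · omega
        · exact h1 (hj (Fin.ext (by omega)))
      · intro t
        simp only [Finset.mem_filter, Finset.mem_univ, true_and, hval, q1]
        rintro ⟨s, hs⟩
        have := hq1 t
        have := (j s).2
        split_ifs at hs
        · omega
        · omega
        · omega
        · exact ⟨s, hs⟩
    obtain ⟨M, hM, hdet⟩ := ih _ hlt _ (hinj t1 q1 hq2) hcnt rfl
    refine exists_of_update hM t1 q1 hdet (a := q0) (b := j t0) (a' := q1) (b' := j t1) (-1) 1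
      one_ne_zero rfl (by omega) hqp ?_ ?_
    · intro x
      have : j t1 ≠ q0 := fun h' => hq1 t1 (congrArg Fin.val h')
      simp [rootMap_apply, this]
    · intro x s hs
      have h1 : j s ≠ q0 := fun h' => hq1 s (congrArg Fin.val h')
      have h2 : j s ≠ j t1 := fun h' => hs (hj h')
      simp [rootMap_apply, h1, h2]

/-- for `1 ≤ d ≤ n`, `i ∈ I^{Sp}_{d,2n}` and `j ∈ \overline{I}^{Sp}_{d,2n}`,
`i ≥^{Sp} j` holds iff there is a `2n×d` matrix `M` of rank `d` whose column span `U` is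
isotropic and lies in the Schubert variety `X_i` (i.e. `dim(U ∩ K_{i_t}) ≥ t` for all
`t`), such that the Plücker coordinate `p_{S(j)}(M) ≠ 0` of the underlying `d`-element
set `S(j)` of `j` is nonzero.  (`p_j` restricted to `X_i` is nonzero iff `i ≥^{Sp} j`.) -/
theorem stmt11 {k : Type*} [Field k] [IsAlgClosed k] (n d : ℕ) (hd1 : 1 ≤ d) (hdn : d ≤ n)
    (i j : Fin d → Fin (2*n)) (hi : IsSpTuple n i) (hj : IsSpBarTuple n j) :
    spGE n i j ↔
      ∃ M : Matrix (Fin (2*n)) (Fin d) k, M.rank = d ∧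
        IsIsotropic k n (LinearMap.range M.mulVecLin) ∧
        (∀ t : Fin d, t.1 + 1 ≤
          Module.finrank k ↥(LinearMap.range M.mulVecLin ⊓ Kspace k n ((i t).1 + 1))) ∧
        pluckerT M j ≠ 0 := by
  constructor
  · intro h
    obtain ⟨M, hM, hdet⟩ := exists_of_cntGE k hi _ j hj.1 (cntGE_of_spGE h) rfl
    exact ⟨M, rank_of_det M j hdet, hM.1, hM.2, (pluckerT_ne_zero_iff M j hj.1).mpr hdet⟩
  · rintro ⟨M, -, -, hflag, hpl⟩
    exact spGE_of_det i j hj M hflag ((pluckerT_ne_zero_iff M j hj.1).mp hpl)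
end

section
/- Let k be an algebraically closed field, 1 ≤ d ≤ 2n, and m ≥ 1. (i) If a finitely supported family of scalars (c_F) indexed by the type C standard monomials F of degree m satisfies Σ_F c_F · F(M) = 0 for every 2n×d matrix M over k of rank d, then c_F = 0 for all F. (ii) For every sequence α_1, …, α_m of d-element subsets of {1,…,2n}, there exist scalars (c_F) indexed by the type C standard monomials F of degree m such that p_{α_1}(M)·…·p_{α_m}(M) = Σ_F c_F · F(M) for every 2n×d matrix M over k. (Hence the type C standard monomials of degree m form a basis of the degree-m component of the homogeneous coordinate ring of the Grassmannian G_{d,2n}.) -/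
/-!
Order `{1, …, 2n}` as `1 < ⋯ < n < 2n < 2n-1 < ⋯ < n+1`. The tuples in `\overline{I}^{Sp}_{d,2n}`
are exactly the increasing tuples for this order (`isSpBarTuple_iff`), and `≥^{Sp}` is the
componentwise comparison (`spGE_iff`). Up to signs, the type C standard monomials are therefore
the classical standard monomials of Hodge for a reordered set of rows, and the theorem is the
classical one. Both halves are proved for an arbitrary row set with an injective rank function
`ρ` to `ℤ`, using minors `rowMinor M f` indexed by arbitrary tuples `f`.

*Spanning* (`minorProd_mem_stdSpan`). Let the height of a tuple be the sum of the ranks of its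
entries. If two increasing tuples `i`, `j` have `height i ≤ height j` but `j t < i t` for some
`t`, antisymmetrizing `p_i p_j` over the `d + 1` rows `j 0, …, j t, i t, …, i (d-1)` gives zero,
and so rewrites `p_i p_j` as a combination of products `p_{i'} p_{j'}` with the same total height
and `height i' < height i` (`exists_exchange`). The sum of the squares of the heights thus
strictly increases. As it takes finitely many values, rewriting ends with families of tuples in
which order of height implies componentwise order, and such a family is standard once sorted by
height.

*Independence* (`coeff_eq_zero_of_sum_minorPoly`). A relation on rank-`d` matrices becomes a
polynomial identity in the entries of a generic matrix, after multiplication by one maximal minor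
(`sum_minorPoly_eq_zero`). Give the variable `X (a, t)` the weight `ρ a * t`. By the rearrangement
inequality the unique heaviest term of a product of minors with increasing rows is the product of
the diagonal terms (`wt_perm`), and a standard sequence is determined by that monomial
(`IsStd.eq_of_expo_eq`). So the coefficients of a relation vanish, starting from the heaviest.
-/

open Matrix BigOperators

/-- A weakly `≥^{Sp}`-decreasing sequence `w_1 ≥^{Sp} … ≥^{Sp} w_m` of tuples in
`\overline{I}^{Sp}_{d,2n}`; such a sequence indexes a type C standard monomial of
degree `m`. -/
def IsStdSeq (n : ℕ) {d m : ℕ} (w : Fin m → Fin d → Fin (2*n)) : Prop :=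
  (∀ l, IsSpBarTuple n (w l)) ∧ ∀ l1 l2 : Fin m, l1 ≤ l2 → spGE n (w l1) (w l2)

/-- The monomial `M ↦ p_{S(w_1)}(M) ⋯ p_{S(w_m)}(M)` attached to a sequence of tuples;
for a standard sequence this is the associated type C standard monomial of degree `m`. -/
def stdMon {k : Type*} [Field k] {n d m : ℕ} (w : Fin m → Fin d → Fin (2*n))
    (M : Matrix (Fin (2*n)) (Fin d) k) : k :=
  ∏ l : Fin m, pluckerT M (w l)

/-! ### Minors and the straightening relation -/

/-- The minor of `M` on the rows `f 0, …, f (d-1)`, taken in this order (repetitions allowed):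
the Plücker coordinate as an alternating function of an index tuple. -/
def rowMinor {k : Type*} [Field k] {α : Type*} {d : ℕ} (M : Matrix α (Fin d) k)
    (f : Fin d → α) : k :=
  (M.submatrix f id).det

lemma rowMinor_comp_perm {k : Type*} [Field k] {α : Type*} {d : ℕ} (M : Matrix α (Fin d) k)
    (f : Fin d → α) (σ : Equiv.Perm (Fin d)) :
    rowMinor M (f ∘ σ) = ((Equiv.Perm.sign σ : ℤ) : k) * rowMinor M f := by
  have := Matrix.det_permute σ (M.submatrix f id)
  simpa [rowMinor, Matrix.submatrix_submatrix] using this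

lemma rowMinor_eq_zero {k : Type*} [Field k] {α : Type*} {d : ℕ} (M : Matrix α (Fin d) k)
    (f : Fin d → α) (hf : ¬ Function.Injective f) : rowMinor M f = 0 := by
  simp only [Function.Injective, not_forall] at hf
  obtain ⟨a, b, hab, hne⟩ := hf
  refine Matrix.det_zero_of_row_eq hne ?_
  ext c
  simp [hab]

/-- The determinant as an alternating function of the rows in positions satisfying `P`, the other
rows `z` being held fixed. -/
def partialDet {k : Type*} [Field k] {d : ℕ} (P : Fin d → Prop) [DecidablePred P]
    (z : {a : Fin d // ¬ P a} → (Fin d → k)) : (Fin d → k) [⋀^{a : Fin d // P a}]→ₗ[k] k :=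
  { MultilinearMap.domDomRestrict
      (Matrix.detRowAlternating (n := Fin d) (R := k)).toMultilinearMap P z with
    map_eq_zero_of_eq' := by
      intro v a b hab hne
      refine (Matrix.detRowAlternating (n := Fin d) (R := k)).map_eq_zero_of_eq
        (fun j => if h : P j then v ⟨j, h⟩ else z ⟨j, h⟩) (i := a.1) (j := b.1) ?_
        (fun h => hne (Subtype.ext h))
      simp [a.2, b.2, hab] }

lemma partialDet_apply {k : Type*} [Field k] {α : Type*} {d : ℕ} (P : Fin d → Prop)
    [DecidablePred P] (M : Matrix α (Fin d) k) (f : Fin d → α) (u : {a : Fin d // P a} → α) :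
    partialDet P (fun a => M (f a)) (fun a => M (u a)) =
      rowMinor M (fun a => if h : P a then u ⟨a, h⟩ else f a) := by
  change Matrix.det _ = _
  unfold rowMinor
  congr 1
  ext a b
  by_cases h : P a <;> simp [h]

/-- If `ρ ≥ c` exactly on the left summand, any permutation not preserving the left summand
strictly lowers the sum of `ρ` over it. -/
lemma sum_inl_lt {A B : Type*} [Fintype A] [Fintype B] (ρ : A ⊕ B → ℤ) (c : ℤ)
    (hA : ∀ a, c ≤ ρ (Sum.inl a)) (hB : ∀ b, ρ (Sum.inr b) < c) (σ : Equiv.Perm (A ⊕ B))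
    (hσ : ∃ a b, σ (Sum.inl a) = Sum.inr b) :
    ∑ a, ρ (σ (Sum.inl a)) < ∑ a, ρ (Sum.inl a) := by
  obtain ⟨a₀, b₀, hab⟩ := hσ
  have h1 : ∑ a, (ρ (σ (Sum.inl a)) - c) < ∑ a, max (ρ (σ (Sum.inl a)) - c) 0 := by
    refine Finset.sum_lt_sum (fun a _ => le_max_left _ _) ⟨a₀, Finset.mem_univ _, ?_⟩
    rw [hab]
    have := hB b₀
    exact lt_max_of_lt_right (by omega)
  have h2 : ∑ a, max (ρ (σ (Sum.inl a)) - c) 0 ≤ ∑ x, max (ρ x - c) 0 := by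
    rw [← Equiv.sum_comp σ (fun x => max (ρ x - c) 0), Fintype.sum_sum_type]
    exact le_add_of_nonneg_right (Finset.sum_nonneg fun _ _ => le_max_right _ _)
  have h3 : ∑ x, max (ρ x - c) 0 = ∑ a, (ρ (Sum.inl a) - c) := by
    rw [Fintype.sum_sum_type, Finset.sum_eq_zero (s := Finset.univ (α := B)), add_zero]
    · exact Finset.sum_congr rfl fun a _ => max_eq_left (sub_nonneg.mpr (hA a))
    · intro b _
      have := hB b
      exact max_eq_right (by omega)
  simp only [Finset.sum_sub_distrib] at h1 h3
  linarith

lemma sum_dite_subtype {α : Type*} {d : ℕ} (ρ : α → ℤ) (P : Fin d → Prop) [DecidablePred P]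
    (u : {a : Fin d // P a} → α) (f : Fin d → α) :
    ∑ a, ρ (if h : P a then u ⟨a, h⟩ else f a) =
      ∑ a : {a // P a}, ρ (u a) + ∑ a : {a // ¬ P a}, ρ (f a) := by
  rw [← Fintype.sum_subtype_add_sum_subtype P]
  congr 1
  · exact Finset.sum_congr rfl fun a _ => by simp [a.2]
  · exact Finset.sum_congr rfl fun a _ => by simp [a.2]

/-- The straightening relation: if `i, j` are increasing and `j t < i t`, antisymmetrizing
`p_i p_j` over the `d + 1` rows `j 0 < … < j t < i t < … < i (d-1)` gives zero, because these are
`d + 1` vectors in a `d`-dimensional space. The antisymmetrization runs over the cosets of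
`Perm {a | t ≤ a} × Perm {a | a ≤ t}`; every coset but the trivial one moves a smaller row into
the first factor, hence lowers its total height. -/
lemma exists_exchange {α : Type*} {d : ℕ} (k : Type*) [Field k] (ρ : α → ℤ) (i j : Fin d → α)
    (hi : StrictMono (ρ ∘ i)) (hj : StrictMono (ρ ∘ j)) (t : Fin d) (ht : ρ (j t) < ρ (i t)) :
    ∃ (κ : Type) (_ : Fintype κ) (c : κ → k) (i' j' : κ → Fin d → α),
      (∀ q, ∑ a, ρ (i' q a) < ∑ a, ρ (i a)) ∧
      (∀ q, ∑ a, ρ (i' q a) + ∑ a, ρ (j' q a) = ∑ a, ρ (i a) + ∑ a, ρ (j a)) ∧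
      ∀ M : Matrix α (Fin d) k, rowMinor M i * rowMinor M j =
        ∑ q, c q * (rowMinor M (i' q) * rowMinor M (j' q)) := by
  classical
  let A := {a : Fin d // t ≤ a}
  let B := {a : Fin d // a ≤ t}
  let v : A ⊕ B → α := Sum.elim (fun a => i a) (fun b => j b)
  let i' : Equiv.Perm (A ⊕ B) → Fin d → α :=
    fun σ a => if h : t ≤ a then v (σ (Sum.inl ⟨a, h⟩)) else i a
  let j' : Equiv.Perm (A ⊕ B) → Fin d → α :=
    fun σ a => if h : a ≤ t then v (σ (Sum.inr ⟨a, h⟩)) else j a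
  let q₀ : Equiv.Perm.ModSumCongr A B := Quotient.mk'' 1
  have hi1 : i' 1 = i := by
    funext a
    simp only [i', v]
    split_ifs <;> simp
  have hj1 : j' 1 = j := by
    funext a
    simp only [j', v]
    split_ifs <;> simp
  have si : ∀ σ, ∑ a, ρ (i' σ a) =
      ∑ a : A, ρ (v (σ (Sum.inl a))) + ∑ a : {a // ¬ t ≤ a}, ρ (i a) :=
    fun σ => sum_dite_subtype ρ _ (fun a : A => v (σ (Sum.inl a))) i
  have sj : ∀ σ, ∑ a, ρ (j' σ a) =
      ∑ a : B, ρ (v (σ (Sum.inr a))) + ∑ a : {a // ¬ a ≤ t}, ρ (j a) :=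
    fun σ => sum_dite_subtype ρ _ (fun a : B => v (σ (Sum.inr a))) j
  have stot : ∀ σ, ∑ a, ρ (i' σ a) + ∑ a, ρ (j' σ a) = ∑ a, ρ (i a) + ∑ a, ρ (j a) := by
    have key : ∀ σ, ∑ a, ρ (i' σ a) + ∑ a, ρ (j' σ a) = ∑ x, ρ (v x) +
        ∑ a : {a // ¬ t ≤ a}, ρ (i a) + ∑ a : {a // ¬ a ≤ t}, ρ (j a) := by
      intro σ
      rw [si, sj, ← Equiv.sum_comp σ (fun x => ρ (v x)), Fintype.sum_sum_type]
      ring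
    intro σ
    rw [key, ← key 1, hi1, hj1]
  refine ⟨{q : Equiv.Perm.ModSumCongr A B // q ≠ q₀}, inferInstance,
    fun q => -((Equiv.Perm.sign q.1.out : ℤ) : k), fun q => i' q.1.out, fun q => j' q.1.out,
    ?_, fun q => stot _, ?_⟩
  · rintro ⟨q, hq⟩
    have hσ : ∃ a b, q.out (Sum.inl a) = Sum.inr b := by
      by_contra! hcon
      apply hq
      rw [← Quotient.out_eq' q]
      refine Quotient.sound' ?_
      rw [QuotientGroup.leftRel_apply]
      have : q.out ∈ (Equiv.Perm.sumCongrHom A B).range := by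
        apply Equiv.Perm.mem_sumCongrHom_range_of_perm_mapsTo_inl
        rintro _ ⟨a, rfl⟩
        rcases h : q.out (Sum.inl a) with a' | b
        · exact ⟨a', rfl⟩
        · exact absurd h (hcon a b)
      simpa using this
    have hlt := sum_inl_lt (fun x => ρ (v x)) (ρ (i t))
      (fun a => hi.monotone a.2) (fun b => lt_of_le_of_lt (hj.monotone b.2) ht) q.out hσ
    have h1 := si 1
    rw [hi1] at h1
    change ∑ a, ρ (i' q.out a) < _
    rw [si, h1]
    simpa using hlt
  · intro M
    let D := AlternatingMap.domCoprod (partialDet (fun a => t ≤ a) (fun a => M (i a)))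
      (partialDet (fun a => a ≤ t) (fun a => M (j a)))
    have hD : D (fun x => M (v x)) = 0 := by
      apply AlternatingMap.map_linearDependent
      intro hli
      have h1 := hli.fintype_card_le_finrank
      have h2 : Fintype.card A = d - t := by
        simp only [A, Fintype.card_subtype]
        have : (Finset.univ.filter fun a : Fin d => t ≤ a) = Finset.Ici t := by ext; simp
        rw [this, Fin.card_Ici]
      have h3 : Fintype.card B = t + 1 := by
        simp only [B, Fintype.card_subtype]
        have : (Finset.univ.filter fun a : Fin d => a ≤ t) = Finset.Iic t := by ext; simp
        rw [this, Fin.card_Iic]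
      rw [Fintype.card_sum, h2, h3, Module.finrank_fin_fun] at h1
      have := t.2
      omega
    have hmul := congrArg (LinearMap.mul' k k) hD
    have hterm : ∀ σ : Equiv.Perm (A ⊕ B), LinearMap.mul' k k
        (AlternatingMap.domCoprod.summand (partialDet (fun a => t ≤ a) (fun a => M (i a)))
          (partialDet (fun a => a ≤ t) (fun a => M (j a))) (Quotient.mk'' σ) (fun x => M (v x))) =
        ((Equiv.Perm.sign σ : ℤ) : k) * (rowMinor M (i' σ) * rowMinor M (j' σ)) := by
      intro σ
      rw [AlternatingMap.domCoprod.summand_mk'']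
      have e1 := partialDet_apply (fun a => t ≤ a) M i (fun a => v (σ (Sum.inl a)))
      have e2 := partialDet_apply (fun a => a ≤ t) M j (fun a => v (σ (Sum.inr a)))
      simp only [i', j', ← e1, ← e2]
      rcases Int.units_eq_one_or (Equiv.Perm.sign σ) with h | h <;> simp [h]
    have hsum : ∑ q : Equiv.Perm.ModSumCongr A B, ((Equiv.Perm.sign q.out : ℤ) : k) *
        (rowMinor M (i' q.out) * rowMinor M (j' q.out)) = 0 := by
      rw [map_zero] at hmul
      rw [← hmul]
      change _ = LinearMap.mul' k k ((∑ q, AlternatingMap.domCoprod.summand _ _ q :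
        MultilinearMap k _ _) _)
      rw [_root_.sum_apply, map_sum]
      refine Finset.sum_congr rfl fun q _ => ?_
      rw [← hterm, Quotient.out_eq']
    have h0 : ((Equiv.Perm.sign q₀.out : ℤ) : k) *
        (rowMinor M (i' q₀.out) * rowMinor M (j' q₀.out)) = rowMinor M i * rowMinor M j := by
      rw [← hterm, Quotient.out_eq', hterm, hi1, hj1]
      simp
    rw [← Fintype.sum_subtype_add_sum_subtype (fun q => q ≠ q₀)] at hsum
    have : Unique {q : Equiv.Perm.ModSumCongr A B // ¬ q ≠ q₀} :=
      ⟨⟨q₀, by simp⟩, fun q => Subtype.ext (not_not.mp q.2)⟩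
    rw [Fintype.sum_unique (f := fun q : {q : Equiv.Perm.ModSumCongr A B // ¬ q ≠ q₀} => _)] at hsum
    have hd : (default : {q : Equiv.Perm.ModSumCongr A B // ¬ q ≠ q₀}).1 = q₀ :=
      not_not.mp (default : {q : Equiv.Perm.ModSumCongr A B // ¬ q ≠ q₀}).2
    rw [hd, h0] at hsum
    simp only [neg_mul, Finset.sum_neg_distrib]
    linear_combination hsum

/-! ### Standard monomials span -/

/-- Standard sequences for the order on `α` pulled back along the rank function `ρ`: each tuple is
increasing, and the sequence of tuples is componentwise weakly decreasing. -/
def IsStd {α : Type*} {d m : ℕ} (ρ : α → ℤ) (w : Fin m → Fin d → α) : Prop :=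
  (∀ l, StrictMono (ρ ∘ w l)) ∧ ∀ l₁ l₂, l₁ ≤ l₂ → ∀ t, ρ (w l₂ t) ≤ ρ (w l₁ t)

/-- The product of the row minors of a sequence of tuples. -/
def minorProd {k : Type*} [Field k] {α : Type*} {d m : ℕ} (w : Fin m → Fin d → α)
    (M : Matrix α (Fin d) k) : k :=
  ∏ l, rowMinor M (w l)

/-- The span of the standard monomials, as functions on matrices. -/
def stdSpan (k : Type*) [Field k] {α : Type*} (d m : ℕ) (ρ : α → ℤ) :
    Submodule k (Matrix α (Fin d) k → k) :=
  Submodule.span k (Set.image minorProd {w : Fin m → Fin d → α | IsStd ρ w})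

lemma minorProd_sort_mem {k : Type*} [Field k] {α : Type*} {d m : ℕ} {ρ : α → ℤ}
    (w : Fin m → Fin d → α) (hw : ∀ l, StrictMono (ρ ∘ w l))
    (hc : ∀ l₁ l₂, ∑ a, ρ (w l₁ a) ≤ ∑ a, ρ (w l₂ a) → ∀ t, ρ (w l₁ t) ≤ ρ (w l₂ t)) :
    (minorProd w : Matrix α (Fin d) k → k) ∈ stdSpan k d m ρ := by
  let τ := Tuple.sort fun l => -∑ a, ρ (w l a)
  have hτ : (minorProd w : Matrix α (Fin d) k → k) = minorProd (w ∘ τ) := by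
    funext M
    exact (Equiv.prod_comp τ fun l => rowMinor M (w l)).symm
  rw [hτ]
  refine Submodule.subset_span ⟨_, ⟨fun l => hw _, fun l₁ l₂ h => hc _ _ ?_⟩, rfl⟩
  exact neg_le_neg_iff.mp (Tuple.monotone_sort (fun l => -∑ a, ρ (w l a)) h)

lemma minorProd_sort_tuples {k : Type*} [Field k] {α : Type*} {d m : ℕ}
    (w : Fin m → Fin d → α) (σ : Fin m → Equiv.Perm (Fin d)) :
    (minorProd w : Matrix α (Fin d) k → k) =
      (∏ l, ((Equiv.Perm.sign (σ l) : ℤ) : k)) • minorProd (fun l => w l ∘ σ l) := by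
  funext M
  simp only [minorProd, Pi.smul_apply, smul_eq_mul, ← Finset.prod_mul_distrib]
  refine Finset.prod_congr rfl fun l _ => ?_
  rw [rowMinor_comp_perm, ← mul_assoc]
  rcases Int.units_eq_one_or (Equiv.Perm.sign (σ l)) with h | h <;> simp [h]

lemma prod_update_two {β γ : Type*} {m : ℕ} [CommMonoid γ] (g : β → γ) (w : Fin m → β)
    {l₁ l₂ : Fin m} (hne : l₁ ≠ l₂) (x y : β) :
    ∏ l, g (Function.update (Function.update w l₁ x) l₂ y l) =
      (g x * g y) * ∏ l ∈ (Finset.univ.erase l₂).erase l₁, g (w l) := by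
  rw [← Finset.mul_prod_erase Finset.univ _ (Finset.mem_univ l₂),
    ← Finset.mul_prod_erase (Finset.univ.erase l₂) _
      (Finset.mem_erase.mpr ⟨hne, Finset.mem_univ l₁⟩)]
  rw [Function.update_self, Function.update_of_ne hne, Function.update_self, ← mul_assoc,
    mul_comm (g y)]
  congr 1
  refine Finset.prod_congr rfl fun l hl => ?_
  simp only [Finset.mem_erase] at hl
  rw [Function.update_of_ne hl.2.1, Function.update_of_ne hl.1]

lemma sum_update_two {β : Type*} {m : ℕ} (g : β → ℤ) (w : Fin m → β)
    {l₁ l₂ : Fin m} (hne : l₁ ≠ l₂) (x y : β) :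
    ∑ l, g (Function.update (Function.update w l₁ x) l₂ y l) =
      (g x + g y) + ∑ l ∈ (Finset.univ.erase l₂).erase l₁, g (w l) :=
  prod_update_two (γ := Multiplicative ℤ) (fun b => Multiplicative.ofAdd (g b)) w hne x y

/-- Straightening. The energy `∑ l, (height of w l)²` is bounded, and strictly increases whenever
the straightening relation is applied to a pair whose first member has the smaller height without
being componentwise below the second. A monomial of maximal energy outside the span would
therefore contain no such pair, so sorting it by height would make it standard. -/
lemma minorProd_mem_stdSpan {k : Type*} [Field k] {α : Type*} [Finite α] {d m : ℕ} {ρ : α → ℤ}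
    (hρ : Function.Injective ρ) (w : Fin m → Fin d → α) :
    (minorProd w : Matrix α (Fin d) k → k) ∈ stdSpan k d m ρ := by
  classical
  have := Fintype.ofFinite α
  let ht : (Fin d → α) → ℤ := fun f => ∑ a, ρ (f a)
  let E : (Fin m → Fin d → α) → ℤ := fun w => ∑ l, ht (w l) ^ 2
  by_contra hw
  obtain ⟨w, hw, hmax⟩ := Finset.exists_max_image (Finset.univ.filter
    fun w : Fin m → Fin d → α => (minorProd w : Matrix α (Fin d) k → k) ∉ stdSpan k d m ρ) E
    ⟨w, by simpa using hw⟩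
  simp only [Finset.mem_filter, Finset.mem_univ, true_and] at hw hmax
  have hinj : ∀ l, Function.Injective (w l) := by
    by_contra! h
    obtain ⟨l, hl⟩ := h
    apply hw
    have : (minorProd w : Matrix α (Fin d) k → k) = 0 := by
      funext M
      exact Finset.prod_eq_zero (Finset.mem_univ l) (rowMinor_eq_zero M _ hl)
    rw [this]
    exact Submodule.zero_mem _
  let σ : Fin m → Equiv.Perm (Fin d) := fun l => Tuple.sort (ρ ∘ w l)
  let u : Fin m → Fin d → α := fun l => w l ∘ σ l
  have hu : ∀ l, StrictMono (ρ ∘ u l) := fun l =>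
    (Tuple.monotone_sort (ρ ∘ w l)).strictMono_of_injective
      ((hρ.comp (hinj l)).comp (σ l).injective)
  have hEu : E u = E w := by
    refine Finset.sum_congr rfl fun l _ => ?_
    have : ht (u l) = ht (w l) := Equiv.sum_comp (σ l) fun a => ρ (w l a)
    rw [this]
  have huw : (minorProd u : Matrix α (Fin d) k → k) ∉ stdSpan k d m ρ := by
    intro h
    apply hw
    rw [minorProd_sort_tuples w σ]
    exact Submodule.smul_mem _ _ h
  by_cases hc : ∀ l₁ l₂, ht (u l₁) ≤ ht (u l₂) → ∀ t, ρ (u l₁ t) ≤ ρ (u l₂ t)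
  · exact huw (minorProd_sort_mem u hu hc)
  push Not at hc
  obtain ⟨l₁, l₂, hle, t, hlt⟩ := hc
  have hne : l₁ ≠ l₂ := by
    rintro rfl
    exact lt_irrefl _ hlt
  obtain ⟨κ, _, c, i', j', h1, h2, h3⟩ := exists_exchange k ρ (u l₁) (u l₂) (hu l₁) (hu l₂) t hlt
  let u' : κ → Fin m → Fin d → α := fun q =>
    Function.update (Function.update u l₁ (i' q)) l₂ (j' q)
  have hself : Function.update (Function.update u l₁ (u l₁)) l₂ (u l₂) = u := by simp
  have hexp : (minorProd u : Matrix α (Fin d) k → k) = ∑ q, c q • minorProd (u' q) := by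
    funext M
    have e0 := prod_update_two (rowMinor M) u hne (u l₁) (u l₂)
    rw [hself] at e0
    simp only [minorProd, Finset.sum_apply, Pi.smul_apply, smul_eq_mul, u']
    rw [e0, h3, Finset.sum_mul]
    refine Finset.sum_congr rfl fun q _ => ?_
    rw [prod_update_two (rowMinor M) u hne, mul_assoc]
  apply huw
  rw [hexp]
  refine Submodule.sum_mem _ fun q _ => Submodule.smul_mem _ _ ?_
  by_contra hq
  have hE := hmax _ hq
  have e0 := sum_update_two (fun f => ht f ^ 2) u hne (u l₁) (u l₂)
  have e1 := sum_update_two (fun f => ht f ^ 2) u hne (i' q) (j' q)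
  rw [hself] at e0
  have h1q : ht (i' q) < ht (u l₁) := h1 q
  have h2q : ht (i' q) + ht (j' q) = ht (u l₁) + ht (u l₂) := h2 q
  have hlt' : E u < E (u' q) := by
    change ∑ l, ht (u l) ^ 2 < ∑ l, ht (u' q l) ^ 2
    rw [e0, e1]
    have hj : ht (j' q) = ht (u l₁) + ht (u l₂) - ht (i' q) := by omega
    rw [hj]
    nlinarith
  omega

/-! ### Linear independence -/

/-- The exponent of the monomial `∏ l, ∏ t, X (g l t, t)`. -/
noncomputable def expo {α : Type*} {d m : ℕ} (g : Fin m → Fin d → α) : α × Fin d →₀ ℕ :=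
  ∑ l, ∑ t, Finsupp.single (g l t, t) 1

/-- The weight `∑ l, ∑ t, ρ (g l t) * t` of the monomial with exponent `expo g`; for increasing
tuples it singles out the diagonal term of each minor as the heaviest one. -/
def wt {α : Type*} {d m : ℕ} (ρ : α → ℤ) (g : Fin m → Fin d → α) : ℤ :=
  ∑ l, ∑ t : Fin d, ρ (g l t) * (t.1 : ℤ)

lemma wt_eq_of_expo_eq {α : Type*} {d m : ℕ} (ρ : α → ℤ) (g g' : Fin m → Fin d → α)
    (h : expo g = expo g') : wt ρ g = wt ρ g' := by
  have key : ∀ g : Fin m → Fin d → α,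
      wt ρ g = (expo g).sum fun p e => e • (ρ p.1 * (p.2.1 : ℤ)) := by
    intro g
    have hadd := fun (s : Finset (Fin m)) (f : Fin m → α × Fin d →₀ ℕ) =>
      Finsupp.sum_finsetSum_index (s := s) (g := f)
        (h := fun (p : α × Fin d) (e : ℕ) => e • (ρ p.1 * (p.2.1 : ℤ)))
        (fun _ => zero_smul _ _) (fun _ _ _ => add_smul _ _ _)
    have hadd' := fun (s : Finset (Fin d)) (f : Fin d → α × Fin d →₀ ℕ) =>
      Finsupp.sum_finsetSum_index (s := s) (g := f)
        (h := fun (p : α × Fin d) (e : ℕ) => e • (ρ p.1 * (p.2.1 : ℤ)))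
        (fun _ => zero_smul _ _) (fun _ _ _ => add_smul _ _ _)
    unfold expo wt
    rw [← hadd]
    refine Finset.sum_congr rfl fun l _ => ?_
    rw [← hadd']
    refine Finset.sum_congr rfl fun t _ => ?_
    rw [Finsupp.sum_single_index] <;> simp
  rw [key, key, h]

/-- A standard sequence can be recovered from its diagonal monomial: the exponents of the variables
in column `t` give the multiset of the entries `w l t`, and these are weakly decreasing in `l`. -/
lemma IsStd.eq_of_expo_eq {α : Type*} {d m : ℕ} {ρ : α → ℤ} (hρ : Function.Injective ρ)
    {w w' : Fin m → Fin d → α} (hw : IsStd ρ w) (hw' : IsStd ρ w') (h : expo w = expo w') :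
    w = w' := by
  classical
  have hcount : ∀ (w : Fin m → Fin d → α) (a : α) (t : Fin d),
      expo w (a, t) = (List.ofFn fun l => w l t).count a := by
    intro w a t
    rw [← Multiset.coe_count, ← Fin.univ_val_map, Multiset.count_map]
    simp only [expo, Finsupp.coe_finsetSum, Finset.sum_apply, Finsupp.single_apply,
      Prod.mk.injEq]
    rw [← Finset.filter_val, Finset.card_val, Finset.card_filter]
    refine Finset.sum_congr rfl fun l _ => ?_
    rw [Finset.sum_eq_single t (fun b _ hb => by simp [hb]) (by simp)]
    simp [eq_comm]
  have hl : ∀ t, (List.ofFn fun l => w l t) = List.ofFn fun l => w' l t := by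
    intro t
    have hperm : (List.ofFn fun l => w l t).Perm (List.ofFn fun l => w' l t) := by
      rw [List.perm_iff_count]
      intro a
      rw [← hcount, ← hcount, h]
    refine hperm.eq_of_pairwise (le := fun a b => ρ b ≤ ρ a)
      (fun a b _ _ h1 h2 => hρ (le_antisymm h2 h1)) ?_ ?_
    · exact List.pairwise_ofFn.mpr fun i j hij => hw.2 i j hij.le t
    · exact List.pairwise_ofFn.mpr fun i j hij => hw'.2 i j hij.le t
  funext l t
  exact congrFun (List.ofFn_injective (hl t)) l

/-- Rearrangement: among the terms of a product of minors with increasing rows, the product of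
the diagonal terms is the unique heaviest one. -/
lemma wt_perm {α : Type*} {d m : ℕ} {ρ : α → ℤ} {w : Fin m → Fin d → α}
    (hw : ∀ l, StrictMono (ρ ∘ w l)) (σ : Fin m → Equiv.Perm (Fin d)) :
    wt ρ (fun l => w l ∘ σ l) ≤ wt ρ w ∧ (wt ρ (fun l => w l ∘ σ l) = wt ρ w → σ = 1) := by
  have hid : StrictMono fun t : Fin d => (t.1 : ℤ) := fun a b h => by simpa using h
  have hmv : ∀ l, Monovary (ρ ∘ w l) fun t : Fin d => (t.1 : ℤ) :=
    fun l a b hab => (hw l).monotone (hid.lt_iff_lt.mp hab).le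
  have hle : ∀ l ∈ Finset.univ, ∑ t : Fin d, ρ ((w l ∘ σ l) t) * (t.1 : ℤ) ≤
      ∑ t : Fin d, ρ (w l t) * (t.1 : ℤ) :=
    fun l _ => (hmv l).sum_comp_perm_mul_le_sum_mul (σ := σ l)
  refine ⟨Finset.sum_le_sum hle, fun heq => ?_⟩
  have heq' := (Finset.sum_eq_sum_iff_of_le hle).mp heq
  funext l
  have h1 := ((hmv l).sum_comp_perm_mul_eq_sum_mul_iff (σ := σ l)).mp (heq' l (Finset.mem_univ l))
  have h2 : Monotone (σ l) := by
    intro a b hab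
    rcases hab.eq_or_lt with rfl | hlt
    · exact le_rfl
    · exact (hw l).le_iff_le.mp (h1 (hid hlt))
  have h3 : (id : Fin d → Fin d) ∘ (σ l) = id ∘ (1 : Equiv.Perm (Fin d)) :=
    Tuple.unique_monotone h2 monotone_id
  exact Equiv.ext fun a => congrFun h3 a

/-- The product of row minors as a polynomial in the entries of a generic matrix. -/
noncomputable def minorPoly (k : Type*) [Field k] {α : Type*} {d m : ℕ}
    (w : Fin m → Fin d → α) : MvPolynomial (α × Fin d) k :=
  ∏ l, Matrix.det (Matrix.of fun r t : Fin d => (MvPolynomial.X (w l r, t) :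
    MvPolynomial (α × Fin d) k))

lemma eval_minorPoly {k : Type*} [Field k] {α : Type*} {d m : ℕ} (w : Fin m → Fin d → α)
    (x : α × Fin d → k) :
    MvPolynomial.eval x (minorPoly k w) = minorProd w (Matrix.of fun a t => x (a, t)) := by
  unfold minorPoly minorProd rowMinor
  rw [map_prod]
  refine Finset.prod_congr rfl fun l _ => ?_
  rw [RingHom.map_det]
  congr 1
  ext r t
  simp

lemma minorPoly_expand (k : Type*) [Field k] {α : Type*} {d m : ℕ} (w : Fin m → Fin d → α) :
    minorPoly k w = ∑ σ : Fin m → Equiv.Perm (Fin d),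
      MvPolynomial.monomial (expo fun l => w l ∘ σ l) (∏ l, ((Equiv.Perm.sign (σ l) : ℤ) : k)) := by
  classical
  unfold minorPoly
  simp only [Matrix.det_apply']
  rw [Finset.prod_univ_sum, Fintype.piFinset_univ]
  refine Finset.sum_congr rfl fun σ _ => ?_
  rw [Finset.prod_mul_distrib, ← mul_one (∏ l, ((Equiv.Perm.sign (σ l) : ℤ) : k)),
    ← MvPolynomial.C_mul_monomial]
  congr 1
  · rw [map_prod]
    simp
  · unfold expo
    rw [MvPolynomial.monomial_sum_one]
    refine Finset.prod_congr rfl fun l _ => ?_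
    rw [MvPolynomial.monomial_sum_one]
    rfl

/-- Linear independence as polynomials: take `w₀` of maximal weight among the standard sequences
with nonzero coefficient, and read off the coefficient of its diagonal monomial. -/
lemma coeff_eq_zero_of_sum_minorPoly {k : Type*} [Field k] {α : Type*} [Fintype α]
    {d m : ℕ} {ρ : α → ℤ} (hρ : Function.Injective ρ) (c : (Fin m → Fin d → α) → k)
    (hc : ∀ w, ¬ IsStd ρ w → c w = 0) (h : ∑ w, MvPolynomial.C (c w) * minorPoly k w = 0) :
    ∀ w, c w = 0 := by
  classical
  by_contra! hne
  obtain ⟨w₁, hw₁⟩ := hne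
  obtain ⟨w₀, hw₀, hmax⟩ := Finset.exists_max_image
    (Finset.univ.filter fun w : Fin m → Fin d → α => c w ≠ 0) (wt ρ) ⟨w₁, by simpa using hw₁⟩
  simp only [Finset.mem_filter, Finset.mem_univ, true_and] at hw₀ hmax
  have hstd : ∀ w, c w ≠ 0 → IsStd ρ w := fun w hw => by
    by_contra hn
    exact hw (hc w hn)
  have hkey : ∀ w, c w ≠ 0 → ∀ σ : Fin m → Equiv.Perm (Fin d),
      expo (fun l => w l ∘ σ l) = expo w₀ → w = w₀ ∧ σ = 1 := by
    intro w hw σ hσ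
    have h1 := wt_eq_of_expo_eq ρ _ _ hσ
    obtain ⟨h2, h3⟩ := wt_perm (hstd w hw).1 σ
    have hσ1 : σ = 1 := h3 (le_antisymm h2 (by rw [h1]; exact hmax w hw))
    subst hσ1
    exact ⟨(hstd w hw).eq_of_expo_eq hρ (hstd w₀ hw₀) hσ, rfl⟩
  have hcoeff := congrArg (MvPolynomial.coeff (expo w₀)) h
  rw [MvPolynomial.coeff_sum, MvPolynomial.coeff_zero, Finset.sum_eq_single w₀] at hcoeff
  · rw [MvPolynomial.coeff_C_mul, minorPoly_expand, MvPolynomial.coeff_sum,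
      Finset.sum_eq_single 1] at hcoeff
    · rw [MvPolynomial.coeff_monomial, if_pos (by rfl)] at hcoeff
      simp at hcoeff
      exact hw₀ hcoeff
    · intro σ _ hσ
      rw [MvPolynomial.coeff_monomial, if_neg]
      exact fun he => hσ (hkey w₀ hw₀ σ he).2
    · simp
  · intro w _ hw
    by_cases hcw : c w = 0
    · simp [hcw]
    rw [MvPolynomial.coeff_C_mul, minorPoly_expand, MvPolynomial.coeff_sum, Finset.sum_eq_zero,
      mul_zero]
    intro σ _
    rw [MvPolynomial.coeff_monomial, if_neg]
    exact fun he => hw (hkey w hcw σ he).1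
  · simp

/-- A combination of products of minors vanishing on rank-`d` matrices vanishes as a polynomial:
multiply it by one fixed nonzero maximal minor, which kills the matrices of smaller rank. -/
lemma sum_minorPoly_eq_zero {k : Type*} [Field k] [Infinite k] {N d m : ℕ} (hd : d ≤ N)
    (c : (Fin m → Fin d → Fin N) → k)
    (h : ∀ M : Matrix (Fin N) (Fin d) k, M.rank = d → ∑ w, c w * minorProd w M = 0) :
    ∑ w, MvPolynomial.C (c w) * minorPoly k w = 0 := by
  classical
  let i₀ : Fin 1 → Fin d → Fin N := fun _ => Fin.castLE hd
  have heval : ∀ x : Fin N × Fin d → k,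
      MvPolynomial.eval x (minorPoly k i₀) =
        rowMinor (Matrix.of fun a t => x (a, t)) (Fin.castLE hd) := by
    intro x
    rw [eval_minorPoly]
    simp [minorProd, i₀]
  have hne : minorPoly k i₀ ≠ 0 := by
    intro h0
    have := heval fun p => if p.1 = Fin.castLE hd p.2 then 1 else 0
    rw [h0, map_zero] at this
    have h1 : (Matrix.of fun (a : Fin N) (t : Fin d) =>
        if a = Fin.castLE hd t then (1 : k) else 0).submatrix (Fin.castLE hd) id = 1 := by
      ext r t
      simp [Matrix.one_apply]
    unfold rowMinor at this
    rw [h1, Matrix.det_one] at this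
    exact zero_ne_one this
  have hmul : (∑ w, MvPolynomial.C (c w) * minorPoly k w) * minorPoly k i₀ = 0 := by
    refine MvPolynomial.funext fun x => ?_
    rw [map_mul, map_zero, heval]
    by_cases hx : rowMinor (Matrix.of fun a t => x (a, t)) (Fin.castLE hd) = 0
    · rw [hx, mul_zero]
    · rw [map_sum]
      simp only [map_mul, MvPolynomial.eval_C, eval_minorPoly]
      rw [h, zero_mul]
      refine le_antisymm (Matrix.rank_le_width _) ?_
      have hu := Matrix.rank_of_isUnit _ ((Matrix.isUnit_iff_isUnit_det _).mpr
        (isUnit_iff_ne_zero.mpr hx))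
      rw [Fintype.card_fin] at hu
      exact hu.symm.le.trans (Matrix.rank_submatrix_le _ _ _)
  exact (mul_eq_zero.mp hmul).resolve_right hne

/-! ### The order of type C -/

/-- The rank function of the order `1 < ⋯ < n < 2n < 2n-1 < ⋯ < n+1`, on zero-based indices. -/
def spRank (n : ℕ) (a : Fin (2*n)) : ℤ := if a.1 < n then a.1 else 3 * n - 1 - a.1

lemma spRank_injective (n : ℕ) : Function.Injective (spRank n) := by
  intro a b h
  unfold spRank at h
  ext
  have := a.2
  have := b.2
  split_ifs at h <;> omega

lemma spRank_lt_iff (n : ℕ) (a : Fin (2*n)) : spRank n a < n ↔ a.1 < n := by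
  unfold spRank
  have := a.2
  split_ifs <;> omega

lemma isSpBarTuple_iff (n : ℕ) {d : ℕ} (i : Fin d → Fin (2*n)) :
    IsSpBarTuple n i ↔ StrictMono (spRank n ∘ i) := by
  classical
  constructor
  · rintro ⟨-, r, -, h1, h2, h3, h4⟩ a b hab
    have ha := (i a).2
    have hb := (i b).2
    have hab' : a.1 < b.1 := hab
    simp only [Function.comp_apply, spRank]
    by_cases hbr : b.1 < r
    · have e1 : (i a).1 < (i b).1 := h1 a b hab hbr
      have e2 := h2 b hbr
      rw [if_pos (by omega), if_pos e2]
      omega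
    · have e2 := h4 b (by omega)
      by_cases har : a.1 < r
      · have e1 := h2 a har
        rw [if_pos e1, if_neg (by omega)]
        omega
      · have e1 := h4 a (by omega)
        have e3 : (i b).1 < (i a).1 := h3 a b hab (by omega)
        rw [if_neg (by omega), if_neg (by omega)]
        omega
  · intro h
    refine ⟨fun a b hab => h.injective (congrArg (spRank n) hab), ?_⟩
    -- the positions holding an index `≤ n` form an initial segment, of length `r`
    let S := Finset.univ.filter fun a : Fin d => (i a).1 < n
    have hlow : ∀ a b : Fin d, a ≤ b → (i b).1 < n → (i a).1 < n := fun a b hab hb =>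
      (spRank_lt_iff n _).mp ((h.monotone hab).trans_lt ((spRank_lt_iff n _).mpr hb))
    have hS : ∀ a : Fin d, a.1 < S.card ↔ (i a).1 < n := by
      intro a
      constructor
      · intro ha
        by_contra hn
        have : S ⊆ Finset.Iio a := by
          intro b hb
          simp only [S, Finset.mem_filter, Finset.mem_univ, true_and] at hb
          rw [Finset.mem_Iio]
          by_contra hab
          exact hn (hlow a b (not_lt.mp hab) hb)
        have := Finset.card_le_card this
        rw [Fin.card_Iio] at this
        omega
      · intro ha
        have : Finset.Iic a ⊆ S := by
          intro b hb
          simp only [S, Finset.mem_filter, Finset.mem_univ, true_and]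
          exact hlow b a (Finset.mem_Iic.mp hb) ha
        have := Finset.card_le_card this
        rw [Fin.card_Iic] at this
        omega
    refine ⟨S.card, (Finset.card_le_univ S).trans_eq (Fintype.card_fin d), ?_, ?_, ?_, ?_⟩
    · intro a b hab hb
      have e := h hab
      have e2 := (hS b).mp hb
      have e1 := hlow a b hab.le e2
      simp only [Function.comp_apply, spRank, if_pos e1, if_pos e2] at e
      exact Fin.lt_def.mpr (by omega)
    · exact fun a => (hS a).mp
    · intro a b hab ha
      have e := h hab
      have e1 : ¬ (i a).1 < n := fun hh => absurd ((hS a).mpr hh) (by omega)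
      have e2 : ¬ (i b).1 < n := fun hh => e1 (hlow a b hab.le hh)
      simp only [Function.comp_apply, spRank, if_neg e1, if_neg e2] at e
      exact Fin.lt_def.mpr (by omega)
    · intro a ha
      by_contra hh
      exact absurd ((hS a).mpr (by omega)) (by omega)

lemma spGE_iff (n : ℕ) {d : ℕ} (i j : Fin d → Fin (2*n)) :
    spGE n i j ↔ ∀ t, spRank n (j t) ≤ spRank n (i t) := by
  refine forall_congr' fun t => ?_
  have := (i t).2
  have := (j t).2
  unfold spRank
  simp only [Fin.le_def]
  split_ifs <;> constructor <;> intro h <;> omega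

lemma isStdSeq_iff (n : ℕ) {d m : ℕ} (w : Fin m → Fin d → Fin (2*n)) :
    IsStdSeq n w ↔ IsStd (spRank n) w := by
  simp only [IsStdSeq, IsStd, isSpBarTuple_iff, spGE_iff]

lemma exists_pluckerS_eq {n d : ℕ} (S : Finset (Fin (2*n))) (hS : S.card = d) :
    ∃ f : Fin d → Fin (2*n), ∀ {k : Type*} [Field k] (M : Matrix (Fin (2*n)) (Fin d) k),
      pluckerS M S = rowMinor M f :=
  ⟨fun a => (S.orderIsoOfFin hS a : Fin (2*n)), fun M => by rw [pluckerS, dif_pos hS]; rfl⟩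

/-- Passing from a tuple to its underlying set changes the minor by the sign of the sorting
permutation, independently of the matrix. -/
lemma exists_pluckerT_eq {n d : ℕ} (k : Type*) [Field k] (f : Fin d → Fin (2*n))
    (hf : Function.Injective f) :
    ∃ ε : k, ε ≠ 0 ∧ ∀ M : Matrix (Fin (2*n)) (Fin d) k, pluckerT M f = ε * rowMinor M f := by
  classical
  have hS : (Finset.image f Finset.univ).card = d := by
    rw [Finset.card_image_of_injective _ hf, Finset.card_univ, Fintype.card_fin]
  let e := (Finset.image f Finset.univ).orderIsoOfFin hS
  let g : Fin d → Fin d := fun a => e.symm ⟨f a, Finset.mem_image_of_mem _ (Finset.mem_univ a)⟩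
  have hg : Function.Injective g := by
    intro a b hab
    exact hf (congrArg Subtype.val (e.symm.injective hab))
  let σ : Equiv.Perm (Fin d) := Equiv.ofBijective g (Finite.injective_iff_bijective.mp hg)
  have hσ : (fun a => (e a : Fin (2*n))) ∘ σ = f := by
    funext a
    simp [σ, g]
  refine ⟨((Equiv.Perm.sign σ : ℤ) : k), ?_, fun M => ?_⟩
  · rcases Int.units_eq_one_or (Equiv.Perm.sign σ) with h | h <;> simp [h]
  · have h1 := rowMinor_comp_perm M (fun a => (e a : Fin (2*n))) σ
    rw [hσ] at h1
    have h2 : pluckerT M f = rowMinor M fun a => (e a : Fin (2*n)) := by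
      rw [pluckerT, pluckerS, dif_pos hS]
      rfl
    rw [h1, h2, ← mul_assoc]
    rcases Int.units_eq_one_or (Equiv.Perm.sign σ) with h | h <;> simp [h]

lemma exists_stdMon_eq {n d m : ℕ} (k : Type*) [Field k] (w : Fin m → Fin d → Fin (2*n))
    (hw : IsStdSeq n w) :
    ∃ ε : k, ε ≠ 0 ∧ ∀ M : Matrix (Fin (2*n)) (Fin d) k, stdMon w M = ε * minorProd w M := by
  choose ε h0 h using fun l => exists_pluckerT_eq k (w l) (hw.1 l).1
  refine ⟨∏ l, ε l, Finset.prod_ne_zero_iff.mpr fun l _ => h0 l, fun M => ?_⟩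
  simp only [stdMon, minorProd, h, Finset.prod_mul_distrib]

/-- (i) the type C standard monomials of degree `m` are linearly
independent as functions on rank-`d` matrices (points of the Grassmannian `G_{d,2n}`);
(ii) every degree-`m` product of Plücker coordinates `p_{α_1} ⋯ p_{α_m}` is a linear
combination of type C standard monomials of degree `m`.  Hence the type C standard
monomials of degree `m` form a basis of the degree-`m` component of the homogeneous
coordinate ring of `G_{d,2n}`. -/
theorem stmt13 {k : Type*} [Field k] [IsAlgClosed k] (n d m : ℕ)
    (hd1 : 1 ≤ d) (hd2 : d ≤ 2*n) (hm : 1 ≤ m) :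
    (∀ c : (Fin m → Fin d → Fin (2*n)) → k,
      (∀ w, ¬ IsStdSeq n w → c w = 0) →
      (∀ M : Matrix (Fin (2*n)) (Fin d) k, M.rank = d →
        ∑ w : Fin m → Fin d → Fin (2*n), c w * stdMon w M = 0) →
      ∀ w, c w = 0) ∧
    (∀ α : Fin m → Finset (Fin (2*n)), (∀ l, (α l).card = d) →
      ∃ c : (Fin m → Fin d → Fin (2*n)) → k,
        (∀ w, ¬ IsStdSeq n w → c w = 0) ∧
        ∀ M : Matrix (Fin (2*n)) (Fin d) k,
          ∏ l : Fin m, pluckerS M (α l) =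
            ∑ w : Fin m → Fin d → Fin (2*n), c w * stdMon w M) := by
  classical
  choose! ε h0 hε using fun w : Fin m → Fin d → Fin (2*n) => exists_stdMon_eq k w
  constructor
  · intro c hc hM w
    have h1 : ∀ w, c w * ε w = 0 := by
      refine coeff_eq_zero_of_sum_minorPoly (spRank_injective n) _ (fun w hw => ?_)
        (sum_minorPoly_eq_zero hd2 _ fun M hr => ?_)
      · rw [hc w (fun h => hw ((isStdSeq_iff n w).mp h)), zero_mul]
      · rw [← hM M hr]
        refine Finset.sum_congr rfl fun w _ => ?_
        by_cases hw : IsStdSeq n w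
        · rw [hε w hw, mul_assoc]
        · simp [hc w hw]
    by_cases hw : IsStdSeq n w
    · exact (mul_eq_zero.mp (h1 w)).resolve_right (h0 w hw)
    · exact hc w hw
  · intro α hα
    choose f hf using fun l => exists_pluckerS_eq (α l) (hα l)
    let g : (Fin m → Fin d → Fin (2*n)) → Matrix (Fin (2*n)) (Fin d) k → k :=
      fun w => if IsStdSeq n w then stdMon w else 0
    have hle : stdSpan k d m (spRank n) ≤ Submodule.span k (Set.range g) := by
      refine Submodule.span_le.mpr ?_
      rintro _ ⟨w, hw, rfl⟩
      have hw' := (isStdSeq_iff n w).mpr hw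
      have : (minorProd w : Matrix (Fin (2*n)) (Fin d) k → k) = (ε w)⁻¹ • g w := by
        funext M
        simp only [g, if_pos hw', Pi.smul_apply, smul_eq_mul, hε w hw' M]
        rw [inv_mul_cancel_left₀ (h0 w hw')]
      rw [this]
      exact Submodule.smul_mem _ _ (Submodule.subset_span ⟨w, rfl⟩)
    obtain ⟨c, hc⟩ := (Submodule.mem_span_range_iff_exists_fun k).mp
      (hle (minorProd_mem_stdSpan (spRank_injective n) f))
    refine ⟨fun w => if IsStdSeq n w then c w else 0, fun w hw => if_neg hw, fun M => ?_⟩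
    have hcM := congrFun hc M
    simp only [Finset.sum_apply, Pi.smul_apply, smul_eq_mul] at hcM
    have hprod : ∏ l, pluckerS M (α l) = minorProd f M :=
      Finset.prod_congr rfl fun l _ => hf l M
    rw [hprod, ← hcM]
    refine Finset.sum_congr rfl fun w _ => ?_
    by_cases hw : IsStdSeq n w <;> simp [g, hw]
end
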